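/- (Theorem 14, first claim.) For s > 0, let 𝒩_A(s) be the number of conjugacy classes of PSL₂(ℤ) consisting of primitive hyperbolic elements γ with translation length ℓ(γ) = 2·arcosh(|tr γ|/2) ≤ s that contain an element ambiguous of the first kind or an element ambiguous of the second kind. Then, as s → +∞, 𝒩_A(s) = (3/(4π²)) s² e^{s/2} + O(s e^{s/2}). -/

import Mathlib

open Matrix
open scoped MatrixGroups

instance : Fact (Even (Fintype.card (Fin 2))) := ⟨⟨1, rfl⟩⟩

/-- The determinant `-1` integer matrix `W = [[1, 0], [0, -1]]`. -/
noncomputable def Wmat : Matrix (Fin 2) (Fin 2) ℤ := !![1, 0; 0, -1]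

/-- The determinant `-1` integer matrix `W₁ = [[1, 0], [1, -1]]`. -/
noncomputable def W1mat : Matrix (Fin 2) (Fin 2) ℤ := !![1, 0; 1, -1]

/-- A lift `A ∈ SL₂(ℤ)` is ambiguous of the first kind if `W·A·W⁻¹ = ±A⁻¹`. -/
def Amb1 (A : SL(2, ℤ)) : Prop :=
  Wmat * (A : Matrix (Fin 2) (Fin 2) ℤ) * Wmat⁻¹ = ((A⁻¹ : SL(2, ℤ)) : Matrix (Fin 2) (Fin 2) ℤ) ∨
  Wmat * (A : Matrix (Fin 2) (Fin 2) ℤ) * Wmat⁻¹ = -((A⁻¹ : SL(2, ℤ)) : Matrix (Fin 2) (Fin 2) ℤ)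

/-- A lift `A ∈ SL₂(ℤ)` is ambiguous of the second kind if `W₁·A·W₁⁻¹ = ±A⁻¹`. -/
def Amb2 (A : SL(2, ℤ)) : Prop :=
  W1mat * (A : Matrix (Fin 2) (Fin 2) ℤ) * W1mat⁻¹ = ((A⁻¹ : SL(2, ℤ)) : Matrix (Fin 2) (Fin 2) ℤ) ∨
  W1mat * (A : Matrix (Fin 2) (Fin 2) ℤ) * W1mat⁻¹ = -((A⁻¹ : SL(2, ℤ)) : Matrix (Fin 2) (Fin 2) ℤ)

/-- The subgroup `{±1}` of `SL₂(ℤ)`. -/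
def pmOne : Subgroup SL(2, ℤ) := Subgroup.zpowers (-1)

instance : pmOne.Normal := by
  constructor
  intro x hx g
  obtain ⟨n, rfl⟩ := Subgroup.mem_zpowers_iff.mp hx
  have hc : Commute g (-1 : SL(2, ℤ)) := by
    show g * (-1) = (-1) * g
    apply Subtype.ext
    show ((g * (-1) : SL(2, ℤ)) : Matrix (Fin 2) (Fin 2) ℤ)
        = (((-1) * g : SL(2, ℤ)) : Matrix (Fin 2) (Fin 2) ℤ)
    simp
  have hcn : Commute g ((-1 : SL(2, ℤ)) ^ n) := hc.zpow_right n
  have : g * (-1 : SL(2, ℤ)) ^ n * g⁻¹ = (-1) ^ n := by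
    rw [hcn.eq, mul_assoc, mul_inv_cancel, mul_one]
  rw [this]
  exact Subgroup.zpow_mem _ (Subgroup.mem_zpowers _) n

/-- `PSL₂(ℤ) = SL₂(ℤ)/{±1}`. -/
abbrev PSL2Z := SL(2, ℤ) ⧸ pmOne

/-- An element of `PSL₂(ℤ)` is hyperbolic if the absolute value of the trace of a lift
to `SL₂(ℤ)` is greater than `2`. -/
def IsHyp (γ : PSL2Z) : Prop :=
  ∃ A : SL(2, ℤ), (QuotientGroup.mk A : PSL2Z) = γ ∧
    2 < |Matrix.trace (A : Matrix (Fin 2) (Fin 2) ℤ)|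

/-- An element of `PSL₂(ℤ)` is primitive if it is not a proper power. -/
def IsPrim (γ : PSL2Z) : Prop := ¬ ∃ (δ : PSL2Z) (n : ℕ), 2 ≤ n ∧ δ ^ n = γ

/-- An element of `PSL₂(ℤ)` is ambiguous of the first kind if it has a lift which is. -/
def AmbFst (γ : PSL2Z) : Prop :=
  ∃ A : SL(2, ℤ), (QuotientGroup.mk A : PSL2Z) = γ ∧ Amb1 A

/-- An element of `PSL₂(ℤ)` is ambiguous of the second kind if it has a lift which is. -/
def AmbSnd (γ : PSL2Z) : Prop :=
  ∃ A : SL(2, ℤ), (QuotientGroup.mk A : PSL2Z) = γ ∧ Amb2 A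

/-- The inverse hyperbolic cosine. -/
noncomputable def arcosh (x : ℝ) : ℝ := Real.log (x + Real.sqrt (x ^ 2 - 1))

/-- The translation length `ℓ(γ) = 2 arcosh(|tr γ|/2)` of `γ ∈ PSL₂(ℤ)` is at most `s`. -/
def TransLenLE (γ : PSL2Z) (s : ℝ) : Prop :=
  ∃ A : SL(2, ℤ), (QuotientGroup.mk A : PSL2Z) = γ ∧
    2 * arcosh (((|Matrix.trace (A : Matrix (Fin 2) (Fin 2) ℤ)| : ℤ) : ℝ) / 2) ≤ s

/-- The number of conjugacy classes of primitive hyperbolic elements of `PSL₂(ℤ)` with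
translation length at most `s` containing an element ambiguous of the first or of the
second kind. -/
noncomputable def NAmb (s : ℝ) : ℕ :=
  {C : ConjClasses PSL2Z | ∃ γ : PSL2Z, ConjClasses.mk γ = C ∧
      IsPrim γ ∧ IsHyp γ ∧ TransLenLE γ s ∧
      ∃ δ : PSL2Z, IsConj γ δ ∧ (AmbFst δ ∨ AmbSnd δ)}.ncard

/-!
A conjugacy class as in the theorem has representatives of trace `t ≥ 3` in `SL₂(ℤ)`, and it
is counted exactly when one of them is inverted by `W` or `W₁`. Every primitive class that is
counted contains exactly four pairs consisting of such a matrix and a reflection `W` or `W₁`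
inverting it: the integer reflections inverting `A` form a coset of the centralizer `{±Aⁿ}`,
conjugation by the centralizer moves them by its squares, which have index four, and every
reflection of `ℤ²` is conjugate to exactly one of `W` and `W₁`, with stabilizer `{±1}`.

The matrices of trace `t` inverted by `W` correspond to the factorizations `x y = (t / 2)² - 1`,
and those inverted by `W₁` to the factorizations `x y = t² - 4` with `x ≡ y` modulo `4`. Counting
them by the smaller factor amounts to averaging the number of square roots of `1` modulo `b`,
which, up to factors at `2`, is `2 ^ ω(b)`; here `∑ 2 ^ ω(n) / n` over `n ≤ N` is
`(3 / π²) log² N + O(log N)`. Lifts that are proper powers are negligible, and the trace bound is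
`T = 2 cosh (s / 2) = e ^ (s / 2) + O(1)`.
-/

/-! ### Divisor sums -/

section NumberTheory

open Finset ArithmeticFunction Filter Asymptotics
open scoped ArithmeticFunction.Moebius

section HarmonicSums

theorem log_le_harmonic (N : ℕ) : Real.log N ≤ harmonic N := by
  simpa using log_le_harmonic_floor N N.cast_nonneg

theorem sum_harmonic_div (N : ℕ) :
    ∑ u ∈ Icc 1 N, (harmonic u : ℝ) / u =
      ((harmonic N : ℝ) ^ 2 + ∑ u ∈ Icc 1 N, 1 / (u : ℝ) ^ 2) / 2 := by
  induction N with
  | zero => simp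
  | succ N ih =>
    rw [sum_Icc_succ_top (by omega), sum_Icc_succ_top (by omega), ih, harmonic_succ]
    push_cast
    field

theorem cast_harmonic_eq_sum (N : ℕ) : (harmonic N : ℝ) = ∑ u ∈ Icc 1 N, 1 / (u : ℝ) := by
  simp [harmonic_eq_sum_Icc]

theorem abs_sum_log_div_sub_le (N : ℕ) :
    |∑ u ∈ Icc 1 N, Real.log u / u - (harmonic N : ℝ) ^ 2 / 2| ≤ (harmonic N : ℝ) := by
  have upper : ∑ u ∈ Icc 1 N, Real.log u / u ≤ ∑ u ∈ Icc 1 N, (harmonic u : ℝ) / u := by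
    gcongr with u
    exact log_le_harmonic u
  have lower : ∑ u ∈ Icc 1 N, (harmonic u : ℝ) / u ≤
      harmonic N + ∑ u ∈ Icc 1 N, Real.log u / u := by
    rw [cast_harmonic_eq_sum, ← sum_add_distrib]
    gcongr with u
    rw [← add_div]
    gcongr
    exact harmonic_le_one_add_log u
  have squares_nonneg : 0 ≤ ∑ u ∈ Icc 1 N, 1 / (u : ℝ) ^ 2 := by positivity
  have squares_le : ∑ u ∈ Icc 1 N, 1 / (u : ℝ) ^ 2 ≤ (harmonic N : ℝ) := by
    rw [cast_harmonic_eq_sum]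
    refine sum_le_sum fun u hu => ?_
    have one_le : (1 : ℝ) ≤ u := by exact_mod_cast (mem_Icc.1 hu).1
    gcongr
    nlinarith
  rw [sum_harmonic_div] at upper lower
  rw [abs_le]
  constructor <;> linarith

/-- The sum `∑_{uv ≤ N} 1/(uv)`, that is `∑_{n ≤ N} d(n)/n` with `d` the number of divisors,
arranged by the first factor. -/
noncomputable def divisorHarmonic (N : ℕ) : ℝ :=
  ∑ u ∈ Icc 1 N, (harmonic (N / u) : ℝ) / u

theorem divisorHarmonic_floor_mem_Icc {y : ℝ} (hy : 1 ≤ y) :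
    divisorHarmonic ⌊y⌋₊ ∈ Set.Icc
      (Real.log y * harmonic ⌊y⌋₊ - ∑ u ∈ Icc 1 ⌊y⌋₊, Real.log u / u)
      ((1 + Real.log y) * harmonic ⌊y⌋₊ - ∑ u ∈ Icc 1 ⌊y⌋₊, Real.log u / u) := by
  rw [cast_harmonic_eq_sum, mul_sum, mul_sum, ← sum_sub_distrib, ← sum_sub_distrib]
  have bounds {u : ℕ} (hu : u ∈ Icc 1 ⌊y⌋₊) :
      (harmonic (⌊y⌋₊ / u) : ℝ) ∈
        Set.Icc (Real.log y - Real.log u) (1 + Real.log y - Real.log u) := by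
    obtain ⟨one_le, le_floor⟩ := mem_Icc.1 hu
    have pos : (0 : ℝ) < u := by exact_mod_cast one_le
    have le : (u : ℝ) ≤ y := (Nat.le_floor_iff (by linarith)).1 le_floor
    have lower := log_le_harmonic_floor (y / u) (by positivity)
    have upper := harmonic_floor_le_one_add_log (y / u) ((one_le_div₀ pos).2 le)
    rw [Nat.floor_div_natCast, Real.log_div (by linarith) pos.ne'] at lower upper
    exact ⟨lower, by linarith⟩
  constructor <;> refine sum_le_sum fun u hu => ?_ <;> rw [mul_one_div, ← sub_div] <;> gcongr
  exacts [(bounds hu).1, (bounds hu).2]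

theorem abs_divisorHarmonic_floor_sub_le {y : ℝ} (hy : 1 ≤ y) :
    |divisorHarmonic ⌊y⌋₊ - Real.log y ^ 2 / 2| ≤ 3 * (1 + Real.log y) := by
  obtain ⟨lower, upper⟩ := divisorHarmonic_floor_mem_Icc hy
  have log_nonneg : 0 ≤ Real.log y := Real.log_nonneg hy
  have log_le := log_le_harmonic_floor y (by linarith)
  have le_log := harmonic_floor_le_one_add_log y hy
  obtain ⟨log_sum_ge, log_sum_le⟩ := abs_le.1 (abs_sum_log_div_sub_le ⌊y⌋₊)
  rw [abs_le]
  constructor <;> nlinarith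

theorem divisorHarmonic_zero : divisorHarmonic 0 = 0 := by simp [divisorHarmonic]

theorem abs_divisorHarmonic_div_sq_sub_le {N g : ℕ} (hN : 0 < N) (hg : 0 < g) :
    |divisorHarmonic (N / g ^ 2) - Real.log N ^ 2 / 2| ≤
      5 * (1 + Real.log N) * (1 + Real.log g) := by
  have hN' : (0 : ℝ) < N := by exact_mod_cast hN
  have hg' : (0 : ℝ) < g := by exact_mod_cast hg
  have logN_nonneg : 0 ≤ Real.log N := Real.log_natCast_nonneg N
  have logg_nonneg : 0 ≤ Real.log g := Real.log_natCast_nonneg g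
  have prod_nonneg : 0 ≤ Real.log N * Real.log g := by positivity
  have log_quot : Real.log (N / (g : ℝ) ^ 2) = Real.log N - 2 * Real.log g := by
    rw [Real.log_div hN'.ne' (pow_pos hg' 2).ne', Real.log_pow]
    norm_cast
  rcases le_or_gt (g ^ 2) N with hle | hlt
  · have one_le : 1 ≤ (N : ℝ) / (g : ℝ) ^ 2 :=
      (one_le_div₀ (by positivity)).2 (by exact_mod_cast hle)
    have bound := abs_divisorHarmonic_floor_sub_le one_le
    have log_le := Real.log_nonneg one_le
    rw [← Nat.cast_pow, Nat.floor_div_eq_div, Nat.cast_pow] at bound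
    rw [log_quot] at bound log_le
    rw [abs_le] at bound ⊢
    constructor <;> nlinarith
  · have quot_lt_one : (N : ℝ) / (g : ℝ) ^ 2 < 1 :=
      (div_lt_one (by positivity)).2 (by exact_mod_cast hlt)
    have log_neg := Real.log_nonpos (by positivity) quot_lt_one.le
    rw [log_quot] at log_neg
    rw [Nat.div_eq_of_lt hlt, divisorHarmonic_zero, zero_sub, abs_neg,
      abs_of_nonneg (by positivity)]
    nlinarith

end HarmonicSums

section CoprimeFactorizations

/-- The number of factorizations `n = u v` with `u` and `v` coprime, i.e. `2 ^ ω(n)`. -/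
def coprimeFactorizations (n : ℕ) : ℕ :=
  #{p ∈ n.divisorsAntidiagonal | Nat.Coprime p.1 p.2}

/-- The lattice points `(u, v)` with `u, v ≥ 1` on or under the hyperbola `u v = N`. -/
def underHyperbola (N : ℕ) : Finset (ℕ × ℕ) :=
  {p ∈ Icc 1 N ×ˢ Icc 1 N | p.1 * p.2 ≤ N}

theorem mem_underHyperbola {N : ℕ} {p : ℕ × ℕ} :
    p ∈ underHyperbola N ↔ 0 < p.1 ∧ 0 < p.2 ∧ p.1 * p.2 ≤ N := by
  simp only [underHyperbola, mem_filter, mem_product, mem_Icc]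
  constructor
  · grind
  · rintro ⟨fst_pos, snd_pos, mul_le⟩
    exact ⟨⟨⟨fst_pos, (Nat.le_mul_of_pos_right _ snd_pos).trans mul_le⟩,
      snd_pos, (Nat.le_mul_of_pos_left _ fst_pos).trans mul_le⟩, mul_le⟩

theorem divisorHarmonic_eq_sum_underHyperbola (N : ℕ) :
    divisorHarmonic N = ∑ p ∈ underHyperbola N, 1 / ((p.1 * p.2 : ℕ) : ℝ) := by
  rw [divisorHarmonic, underHyperbola, sum_filter, sum_product]
  refine sum_congr rfl fun u hu => ?_
  have u_pos : 0 < u := (mem_Icc.1 hu).1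
  have row : {v ∈ Icc 1 N | u * v ≤ N} = Icc 1 (N / u) := by
    ext v
    simp only [mem_filter, mem_Icc, Nat.le_div_iff_mul_le u_pos, mul_comm u v]
    have := Nat.le_mul_of_pos_right v u_pos
    omega
  rw [← sum_filter, row, cast_harmonic_eq_sum, sum_div]
  refine sum_congr rfl fun v _ => ?_
  rw [div_div, Nat.cast_mul, mul_comm]

theorem sum_coprimeFactorizations_div_eq (N : ℕ) :
    ∑ n ∈ Icc 1 N, (coprimeFactorizations n : ℝ) / n =
      ∑ p ∈ underHyperbola N with Nat.Coprime p.1 p.2, 1 / ((p.1 * p.2 : ℕ) : ℝ) := by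
  have product_mem : ∀ p ∈ {p ∈ underHyperbola N | Nat.Coprime p.1 p.2},
      p.1 * p.2 ∈ Icc 1 N := by
    intro p hp
    obtain ⟨fst_pos, snd_pos, mul_le⟩ := mem_underHyperbola.1 (mem_filter.1 hp).1
    exact mem_Icc.2 ⟨Nat.mul_pos fst_pos snd_pos, mul_le⟩
  rw [← sum_fiberwise_of_maps_to product_mem]
  refine sum_congr rfl fun n hn => ?_
  have fiber : {p ∈ {p ∈ underHyperbola N | Nat.Coprime p.1 p.2} | p.1 * p.2 = n} =
      {p ∈ n.divisorsAntidiagonal | Nat.Coprime p.1 p.2} := by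
    ext p
    simp only [mem_filter, mem_underHyperbola, Nat.mem_divisorsAntidiagonal]
    rw [mem_Icc] at hn
    constructor
    · grind
    · rintro ⟨⟨rfl, ne_zero⟩, coprime⟩
      exact ⟨⟨⟨Nat.pos_of_ne_zero (left_ne_zero_of_mul ne_zero),
        Nat.pos_of_ne_zero (right_ne_zero_of_mul ne_zero), hn.2⟩, coprime⟩, rfl⟩
  rw [fiber, sum_congr rfl fun p hp => by
    rw [(Nat.mem_divisorsAntidiagonal.1 (mem_filter.1 hp).1).1]]
  simp [coprimeFactorizations, div_eq_mul_inv]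

theorem ite_coprime_eq_sum_moebius {N u v : ℕ} (hu : 0 < u) (huN : u ≤ N) :
    (if Nat.Coprime u v then 1 else 0 : ℝ) = ∑ g ∈ Icc 1 N with g ∣ u ∧ g ∣ v, (μ g : ℝ) := by
  have divisors_gcd : {g ∈ Icc 1 N | g ∣ u ∧ g ∣ v} = (Nat.gcd u v).divisors := by
    ext g
    simp only [mem_filter, mem_Icc, Nat.mem_divisors, Nat.dvd_gcd_iff]
    have gcd_pos := Nat.gcd_pos_of_pos_left v hu
    constructor
    · grind
    · rintro ⟨dvd, -⟩
      exact ⟨⟨Nat.pos_of_dvd_of_pos dvd.1 hu, (Nat.le_of_dvd hu dvd.1).trans huN⟩, dvd⟩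
  rw [divisors_gcd, ← Int.cast_sum, ← coe_mul_zeta_apply, moebius_mul_coe_zeta,
    ArithmeticFunction.one_apply]
  simp [Nat.coprime_iff_gcd_eq_one]

theorem sum_underHyperbola_dvd {N g : ℕ} (hg : 0 < g) (f : ℕ × ℕ → ℝ) :
    ∑ p ∈ underHyperbola N with g ∣ p.1 ∧ g ∣ p.2, f p =
      ∑ p ∈ underHyperbola (N / g ^ 2), f (g * p.1, g * p.2) := by
  have le_iff (u v : ℕ) : g * u * (g * v) ≤ N ↔ u * v ≤ N / g ^ 2 := by
    rw [Nat.le_div_iff_mul_le (by positivity)]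
    ring_nf
  refine (sum_nbij' (fun p => (g * p.1, g * p.2)) (fun p => (p.1 / g, p.2 / g))
    ?_ ?_ ?_ ?_ fun _ _ => rfl).symm
  · intro p hp
    simp_all [mem_underHyperbola]
  · rintro ⟨_, _⟩ hp
    obtain ⟨under, ⟨u, rfl⟩, ⟨v, rfl⟩⟩ := mem_filter.1 hp
    simp_all [mem_underHyperbola]
  · intro p _
    simp [Nat.mul_div_cancel_left _ hg]
  · intro p hp
    obtain ⟨-, dvd_fst, dvd_snd⟩ := mem_filter.1 hp
    simp [Nat.mul_div_cancel' dvd_fst, Nat.mul_div_cancel' dvd_snd]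

theorem sum_coprimeFactorizations_div_eq_sum_moebius (N : ℕ) :
    ∑ n ∈ Icc 1 N, (coprimeFactorizations n : ℝ) / n =
      ∑ g ∈ Icc 1 N, (μ g : ℝ) / (g : ℝ) ^ 2 * divisorHarmonic (N / g ^ 2) := by
  have insert_moebius : ∀ p ∈ underHyperbola N,
      (if Nat.Coprime p.1 p.2 then 1 / ((p.1 * p.2 : ℕ) : ℝ) else 0) =
        ∑ g ∈ Icc 1 N, if g ∣ p.1 ∧ g ∣ p.2 then μ g * (1 / ((p.1 * p.2 : ℕ) : ℝ)) else 0 := by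
    intro p hp
    rw [← sum_filter, ← sum_mul,
      ← ite_coprime_eq_sum_moebius (mem_underHyperbola.1 hp).1
        (mem_Icc.1 (mem_product.1 (mem_filter.1 hp).1).1).2, ite_mul, one_mul, zero_mul]
  rw [sum_coprimeFactorizations_div_eq, sum_filter, sum_congr rfl insert_moebius, sum_comm]
  refine sum_congr rfl fun g hg => ?_
  rw [← sum_filter, sum_underHyperbola_dvd (mem_Icc.1 hg).1, divisorHarmonic_eq_sum_underHyperbola,
    mul_sum]
  refine sum_congr rfl fun p _ => ?_
  push_cast
  rw [div_mul_div_comm, mul_one_div, mul_one]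
  ring_nf

theorem hasSum_moebius_div_sq :
    HasSum (fun g : ℕ => (μ g : ℝ) / (g : ℝ) ^ 2) (6 / Real.pi ^ 2) := by
  have one_lt : (1 : ℝ) < (2 : ℂ).re := by norm_num
  have inverse := LSeries_zeta_mul_Lseries_moebius one_lt
  rw [LSeries_zeta_eq_riemannZeta one_lt, riemannZeta_two] at inverse
  have value : LSeries (fun n => ((μ n : ℤ) : ℂ)) 2 = ((6 / Real.pi ^ 2 : ℝ) : ℂ) := by
    have pi_ne : (Real.pi : ℂ) ≠ 0 := by exact_mod_cast Real.pi_ne_zero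
    push_cast
    field_simp at inverse ⊢
    linear_combination inverse
  rw [← Complex.hasSum_ofReal, ← value]
  convert! (LSeriesSummable_moebius_iff.mpr one_lt).hasSum using 2 with g
  rcases eq_or_ne g 0 with rfl | g_ne
  · simp
  · rw [LSeries.term_of_ne_zero g_ne]
    norm_cast

theorem summable_one_add_log_div_sq : Summable fun g : ℕ => (1 + Real.log g) / (g : ℝ) ^ 2 := by
  have comparison : Summable fun g : ℕ => 3 * (1 / (g : ℝ) ^ (3 / 2 : ℝ)) :=
    (Real.summable_one_div_nat_rpow.2 (by norm_num)).mul_left 3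
  refine comparison.of_nonneg_of_le
    (fun g => div_nonneg (by linarith [Real.log_natCast_nonneg g]) (by positivity)) fun g => ?_
  rcases g.eq_zero_or_pos with rfl | g_pos
  · simp
  have one_le : (1 : ℝ) ≤ g := by exact_mod_cast g_pos
  have log_le := Real.log_le_rpow_div g.cast_nonneg (ε := 1 / 2) (by norm_num)
  have one_le_sqrt : (1 : ℝ) ≤ (g : ℝ) ^ (1 / 2 : ℝ) := Real.one_le_rpow one_le (by norm_num)
  have sq_eq : (g : ℝ) ^ 2 = (g : ℝ) ^ (1 / 2 : ℝ) * (g : ℝ) ^ (3 / 2 : ℝ) := by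
    rw [← Real.rpow_add (by positivity), ← Real.rpow_natCast]
    norm_num
  rw [sq_eq, mul_one_div, ← div_div]
  gcongr
  rw [div_le_iff₀ (by positivity)]
  linarith

theorem hasSum_moebius_mul_divisorHarmonic (N : ℕ) :
    HasSum (fun g : ℕ => (μ g : ℝ) / (g : ℝ) ^ 2 * divisorHarmonic (N / g ^ 2))
      (∑ n ∈ Icc 1 N, (coprimeFactorizations n : ℝ) / n) := by
  rw [sum_coprimeFactorizations_div_eq_sum_moebius]
  refine hasSum_sum_of_ne_finset_zero fun g hg => ?_
  rcases g.eq_zero_or_pos with rfl | g_pos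
  · simp
  · have lt_sq : N < g ^ 2 := by
      have : N < g := by simp only [mem_Icc] at hg; omega
      nlinarith
    rw [Nat.div_eq_of_lt lt_sq, divisorHarmonic_zero, mul_zero]

theorem sum_coprimeFactorizations_div_isBigO :
    (fun N : ℕ => ∑ n ∈ Icc 1 N, (coprimeFactorizations n : ℝ) / n -
      3 / Real.pi ^ 2 * Real.log N ^ 2) =O[atTop] fun N : ℕ => 1 + Real.log N := by
  refine .of_bound (5 * ∑' g : ℕ, (1 + Real.log g) / (g : ℝ) ^ 2) ?_
  filter_upwards [eventually_gt_atTop 0] with N hN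
  have logN_nonneg : 0 ≤ Real.log N := Real.log_natCast_nonneg N
  have difference := (hasSum_moebius_mul_divisorHarmonic N).sub
    (hasSum_moebius_div_sq.mul_right (Real.log N ^ 2 / 2))
  rw [show 3 / Real.pi ^ 2 * Real.log N ^ 2 = 6 / Real.pi ^ 2 * (Real.log N ^ 2 / 2) by ring,
    ← difference.tsum_eq, Real.norm_of_nonneg (by linarith : 0 ≤ 1 + Real.log N),
    mul_right_comm, ← tsum_mul_left]
  refine tsum_of_norm_bounded (summable_one_add_log_div_sq.mul_left _).hasSum fun g => ?_
  rcases g.eq_zero_or_pos with rfl | g_pos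
  · simp
  have moebius_le : |(μ g : ℝ)| ≤ 1 := by exact_mod_cast abs_moebius_le_one (n := g)
  rw [← mul_sub, Real.norm_eq_abs, abs_mul, abs_div, abs_of_pos (a := (g : ℝ) ^ 2) (by positivity)]
  calc |(μ g : ℝ)| / (g : ℝ) ^ 2 * |divisorHarmonic (N / g ^ 2) - Real.log N ^ 2 / 2|
      ≤ 1 / (g : ℝ) ^ 2 * (5 * (1 + Real.log N) * (1 + Real.log g)) := by
        gcongr
        exact abs_divisorHarmonic_div_sq_sub_le hN g_pos
    _ = 5 * (1 + Real.log N) * ((1 + Real.log g) / (g : ℝ) ^ 2) := by ring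

end CoprimeFactorizations

section CountPeriodic

variable {p : ℕ → Prop} [DecidablePred p]

theorem count_congr {q : ℕ → Prop} [DecidablePred q] (h : ∀ k, p k ↔ q k) (n : ℕ) :
    Nat.count p n = Nat.count q n := by
  simp only [Nat.count_eq_card_filter_range, h]

theorem count_two_mul (m : ℕ) :
    Nat.count p (2 * m) =
      Nat.count (fun r => p (2 * r)) m + Nat.count (fun r => p (2 * r + 1)) m := by
  induction m with
  | zero => simp
  | succ m ih =>
    rw [show 2 * (m + 1) = 2 * m + 1 + 1 by ring]
    simp only [Nat.count_succ, ih]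
    ring

theorem count_two_mul_of_not_even (h : ∀ r, ¬ p (2 * r)) (m : ℕ) :
    Nat.count p (2 * m) = Nat.count (fun r => p (2 * r + 1)) m := by
  simp [count_two_mul, h]

theorem count_two_mul_of_not_odd (h : ∀ r, ¬ p (2 * r + 1)) (m : ℕ) :
    Nat.count p (2 * m) = Nat.count (fun r => p (2 * r)) m := by
  simp [count_two_mul, h]

variable {q : ℕ}

theorem count_mul_add_of_periodic (hp : Function.Periodic p q) (k n : ℕ) :
    Nat.count p (k * q + n) = k * Nat.count p q + Nat.count p n := by
  induction k with
  | zero => simp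
  | succ k ih =>
    rw [show (k + 1) * q + n = k * q + n + q by ring, Nat.count_add',
      count_congr fun j => iff_of_eq (hp j), ih]
    ring

theorem count_two_mul_of_periodic (hp : Function.Periodic p q) :
    Nat.count p (2 * q) = 2 * Nat.count p q := by
  simpa using count_mul_add_of_periodic hp 2 0

theorem abs_count_sub_div_mul_le (hp : Function.Periodic p q) (hq : 0 < q) (n : ℕ) :
    |(Nat.count p n : ℝ) - n / q * Nat.count p q| ≤ Nat.count p q := by
  have q_pos : (0 : ℝ) < q := by exact_mod_cast hq
  have count_eq : (Nat.count p n : ℝ) =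
      (n / q : ℕ) * Nat.count p q + Nat.count p (n % q) := by
    rw [← Nat.cast_mul, ← Nat.cast_add, ← count_mul_add_of_periodic hp, Nat.div_add_mod']
  have rem_le : (Nat.count p (n % q) : ℝ) ≤ Nat.count p q := by
    exact_mod_cast Nat.count_monotone p (Nat.mod_lt n hq).le
  have div_eq : (n : ℝ) / q = (n / q : ℕ) + ((n % q : ℕ) : ℝ) / q := by
    rw [eq_comm, ← eq_sub_iff_add_eq', div_eq_iff q_pos.ne', sub_mul, div_mul_cancel₀ _ q_pos.ne',
      eq_sub_iff_add_eq']
    exact_mod_cast Nat.div_add_mod' n q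
  have frac_le : ((n % q : ℕ) : ℝ) / q * Nat.count p q ≤ Nat.count p q :=
    mul_le_of_le_one_left (by positivity)
      ((div_le_one q_pos).2 (by exact_mod_cast (Nat.mod_lt n hq).le))
  have frac_nonneg : 0 ≤ ((n % q : ℕ) : ℝ) / q * Nat.count p q := by positivity
  rw [count_eq, div_eq, abs_le]
  constructor <;> linarith [(Nat.count p (n % q)).cast_nonneg (α := ℝ)]

theorem count_comp_of_periodic (hp : Function.Periodic p q) (hq : 0 < q)
    {f : ℕ → ℕ} (hf : ∀ x y, f x ≡ f y [MOD q] → x ≡ y [MOD q]) :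
    Nat.count (fun a => p (f a)) q = Nat.count p q := by
  have maps : Set.MapsTo (fun x => f x % q) (range q : Set ℕ) (range q : Set ℕ) :=
    fun x _ => by simpa using Nat.mod_lt _ hq
  have inj : Set.InjOn (fun x => f x % q) (range q : Set ℕ) := fun x hx y hy h =>
    Nat.ModEq.eq_of_lt_of_lt (hf x y h) (by simpa using hx) (by simpa using hy)
  rw [Nat.count_eq_card_filter_range, Nat.count_eq_card_filter_range]
  refine card_nbij (fun x => f x % q) (fun x hx => ?_) (inj.mono (filter_subset _ _))
    fun y hy => ?_
  · simp only [coe_filter, Set.mem_ofPred_eq] at hx ⊢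
    exact ⟨maps hx.1, (iff_of_eq (hp.map_mod_nat _)).2 hx.2⟩
  · simp only [coe_filter, Set.mem_ofPred_eq] at hy
    obtain ⟨x, hx, rfl⟩ := surjOn_of_injOn_of_card_le _ maps inj le_rfl hy.1
    exact ⟨x, by simpa using ⟨mem_range.1 hx, (iff_of_eq (hp.map_mod_nat _)).1 hy.2⟩, rfl⟩

end CountPeriodic

section RootCounts

theorem gcd_mul_gcd_succ {n r : ℕ} (h : n ∣ r * (r + 1)) :
    n.gcd r * n.gcd (r + 1) = n := by
  rw [← Nat.Coprime.gcd_mul n (by simp), Nat.gcd_eq_left h]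

theorem gcd_mul_eq_left_of_dvd_of_coprime {u v k : ℕ} (hu : u ∣ k) (hv : v.Coprime k) :
    (u * v).gcd k = u := by
  rw [mul_comm, Nat.Coprime.gcd_mul_left_cancel u hv, Nat.gcd_eq_left hu]

theorem gcd_pair_injOn_roots (n : ℕ) :
    Set.InjOn (fun r => (n.gcd r, n.gcd (r + 1))) {r | r < n ∧ n ∣ r * (r + 1)} := by
  rintro r ⟨r_lt, r_dvd⟩ s ⟨s_lt, -⟩ h
  obtain ⟨gcd_eq, gcd_succ_eq⟩ := Prod.mk.inj h
  have coprime : Nat.Coprime (n.gcd r) (n.gcd (r + 1)) := Nat.Coprime.gcd_both n n (by simp)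
  have modEq_fst : r ≡ s [MOD n.gcd r] :=
    (Nat.modEq_zero_iff_dvd.2 (n.gcd_dvd_right r)).trans
      (Nat.modEq_zero_iff_dvd.2 (gcd_eq ▸ n.gcd_dvd_right s)).symm
  have modEq_snd : r ≡ s [MOD n.gcd (r + 1)] :=
    .add_right_cancel' 1 <| (Nat.modEq_zero_iff_dvd.2 (n.gcd_dvd_right (r + 1))).trans
      (Nat.modEq_zero_iff_dvd.2 (gcd_succ_eq ▸ n.gcd_dvd_right (s + 1))).symm
  have modEq := (Nat.modEq_and_modEq_iff_modEq_mul coprime).1 ⟨modEq_fst, modEq_snd⟩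
  rw [gcd_mul_gcd_succ r_dvd] at modEq
  exact modEq.eq_of_lt_of_lt r_lt s_lt

theorem exists_root_gcd_eq {u v : ℕ} (hu : 0 < u) (hv : 0 < v) (huv : u.Coprime v) :
    ∃ r < u * v, u * v ∣ r * (r + 1) ∧ (u * v).gcd r = u ∧ (u * v).gcd (r + 1) = v := by
  set r := (Nat.chineseRemainder huv 0 (v - 1) : ℕ)
  obtain ⟨modEq_u, modEq_v⟩ := (Nat.chineseRemainder huv 0 (v - 1)).2
  have u_dvd : u ∣ r := Nat.modEq_zero_iff_dvd.1 modEq_u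
  have v_dvd : v ∣ r + 1 := by
    refine Nat.modEq_zero_iff_dvd.1 ((modEq_v.add_right 1).trans ?_)
    rw [Nat.sub_add_cancel hv]
    exact Nat.modEq_zero_iff_dvd.2 dvd_rfl
  have coprime : r.Coprime (r + 1) := by simp
  refine ⟨r, Nat.chineseRemainder_lt_mul huv _ _ hu.ne' hv.ne', mul_dvd_mul u_dvd v_dvd, ?_, ?_⟩
  · exact gcd_mul_eq_left_of_dvd_of_coprime u_dvd (coprime.symm.coprime_dvd_left v_dvd)
  · rw [mul_comm]
    exact gcd_mul_eq_left_of_dvd_of_coprime v_dvd (coprime.coprime_dvd_left u_dvd)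

theorem count_dvd_mul_succ (n : ℕ) :
    Nat.count (fun r => n ∣ r * (r + 1)) n = coprimeFactorizations n := by
  rw [Nat.count_eq_card_filter_range, coprimeFactorizations]
  refine card_nbij (fun r => (n.gcd r, n.gcd (r + 1))) (fun r hr => ?_) ?_ ?_
  · simp only [coe_filter, mem_range, Set.mem_ofPred_eq, Nat.mem_divisorsAntidiagonal] at hr ⊢
    exact ⟨⟨gcd_mul_gcd_succ hr.2, by omega⟩, Nat.Coprime.gcd_both n n (by simp)⟩
  · simpa using gcd_pair_injOn_roots n
  · rintro ⟨u, v⟩ huv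
    simp only [coe_filter, Nat.mem_divisorsAntidiagonal, Set.mem_ofPred_eq] at huv
    obtain ⟨⟨rfl, ne_zero⟩, coprime⟩ := huv
    obtain ⟨r, r_lt, dvd, gcd_eq, gcd_succ_eq⟩ :=
      exists_root_gcd_eq (Nat.pos_of_ne_zero (left_ne_zero_of_mul ne_zero))
        (Nat.pos_of_ne_zero (right_ne_zero_of_mul ne_zero)) coprime
    exact ⟨r, by simpa using ⟨r_lt, dvd⟩, by simp [gcd_eq, gcd_succ_eq]⟩

theorem periodic_dvd_mul_succ (n : ℕ) : Function.Periodic (fun r => n ∣ r * (r + 1)) n := by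
  intro r
  beta_reduce
  rw [show (r + n) * (r + n + 1) = r * (r + 1) + n * (2 * r + n + 1) by ring,
    ← Nat.dvd_add_iff_left (dvd_mul_right _ _)]

theorem coprimeFactorizations_two_mul_of_odd {n : ℕ} (hn : Odd n) :
    coprimeFactorizations (2 * n) = 2 * coprimeFactorizations n := by
  rw [← count_dvd_mul_succ, ← count_dvd_mul_succ,
    ← count_two_mul_of_periodic (periodic_dvd_mul_succ n)]
  refine count_congr (fun r => ⟨(dvd_mul_left _ _).trans, fun h => ?_⟩) _
  exact (Nat.coprime_two_left.2 hn).mul_dvd_of_dvd_of_dvd (Nat.even_mul_succ_self r).two_dvd h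

theorem coprimeFactorizations_four_mul (n : ℕ) :
    coprimeFactorizations (4 * n) = coprimeFactorizations (2 * n) := by
  rcases n.eq_zero_or_pos with rfl | n_pos
  · rfl
  rw [← count_dvd_mul_succ, ← count_dvd_mul_succ, show 4 * n = 2 * n + 2 * n by ring,
    Nat.count_add]
  simp only [Nat.count_eq_card_filter_range, card_filter, ← sum_add_distrib]
  refine sum_congr rfl fun k _ => ?_
  have shift : (2 * n + k) * (2 * n + k + 1) = k * (k + 1) + 2 * n * (2 * n + 2 * k + 1) := by ring
  rw [shift, ← two_mul, mul_comm 2 (2 * n)]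
  by_cases dvd : 2 * n ∣ k * (k + 1)
  · obtain ⟨m, hm⟩ := dvd
    simp only [hm, ← mul_add, Nat.mul_dvd_mul_iff_left (by omega : 0 < 2 * n), dvd_mul_right]
    split_ifs <;> omega
  · have not_dvd {x : ℕ} (h : ¬ 2 * n ∣ x) : ¬ 2 * n * 2 ∣ x :=
      fun hx => h ((dvd_mul_right _ _).trans hx)
    rw [if_neg dvd, if_neg (not_dvd dvd), if_neg (not_dvd _)]
    rwa [← Nat.dvd_add_iff_left (dvd_mul_right _ _)]

/-- The number of residues `a` modulo `b` with `a² ≡ 1`. -/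
def squareRootsOfOne (b : ℕ) : ℕ :=
  Nat.count (fun a : ℕ => (b : ℤ) ∣ (a : ℤ) ^ 2 - 1) b

theorem periodic_dvd_sq_sub (b : ℕ) (c : ℤ) :
    Function.Periodic (fun a : ℕ => (b : ℤ) ∣ (a : ℤ) ^ 2 - c) b := by
  intro a
  have shift : ((a + b : ℕ) : ℤ) ^ 2 - c = (a : ℤ) ^ 2 - c + b * (2 * a + b) := by
    push_cast
    ring
  beta_reduce
  rw [shift, dvd_add_left (dvd_mul_right _ _)]

theorem modEq_of_two_mul_add_modEq {b : ℕ} (hb : Odd b) (c x y : ℕ)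
    (h : 2 * x + c ≡ 2 * y + c [MOD b]) : x ≡ y [MOD b] :=
  (h.add_right_cancel' c).cancel_left_of_coprime (by simpa using hb)

theorem dvd_four_mul_iff_of_odd {b : ℕ} (hb : Odd b) {x : ℤ} : (b : ℤ) ∣ 4 * x ↔ (b : ℤ) ∣ x := by
  have coprime : IsCoprime (b : ℤ) 4 := by
    exact_mod_cast Nat.isCoprime_iff_coprime.2 (hb.coprime_two_right.pow_right 2)
  exact ⟨coprime.dvd_of_dvd_mul_left, fun h => h.mul_left 4⟩

theorem squareRootsOfOne_of_odd {b : ℕ} (hb : Odd b) :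
    squareRootsOfOne b = coprimeFactorizations b := by
  rw [squareRootsOfOne, ← count_dvd_mul_succ,
    ← count_comp_of_periodic (periodic_dvd_sq_sub b 1) hb.pos (modEq_of_two_mul_add_modEq hb 1)]
  refine count_congr (fun r => ?_) b
  rw [← Int.natCast_dvd_natCast, ← dvd_four_mul_iff_of_odd hb (x := (r * (r + 1) : ℕ))]
  push_cast
  ring_nf

theorem squareRootsOfOne_two_mul (n : ℕ) :
    squareRootsOfOne (2 * n) = Nat.count (fun r => n ∣ 2 * (r * (r + 1))) n := by
  rw [squareRootsOfOne, count_two_mul_of_not_even]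
  · refine count_congr (fun r => ?_) n
    have sq_sub_one : ((2 * r + 1 : ℕ) : ℤ) ^ 2 - 1 = 2 * (2 * (r * (r + 1)) : ℕ) := by
      push_cast
      ring
    rw [sq_sub_one, Nat.cast_mul, Nat.cast_two, mul_dvd_mul_iff_left two_ne_zero,
      Int.natCast_dvd_natCast]
  · intro r h
    have two_dvd : (2 : ℤ) ∣ (2 * r : ℕ) ^ 2 - 1 := (dvd_mul_right 2 (n : ℤ)).trans (mod_cast h)
    push_cast at two_dvd
    ring_nf at two_dvd
    omega

theorem squareRootsOfOne_two_mul_of_odd {n : ℕ} (hn : Odd n) :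
    squareRootsOfOne (2 * n) = coprimeFactorizations n := by
  rw [squareRootsOfOne_two_mul, ← count_dvd_mul_succ]
  exact count_congr (fun r => hn.coprime_two_right.dvd_mul_left) n

theorem squareRootsOfOne_four_mul (n : ℕ) :
    squareRootsOfOne (4 * n) = 2 * coprimeFactorizations n := by
  rw [show 4 * n = 2 * (2 * n) by ring, squareRootsOfOne_two_mul, ← count_dvd_mul_succ,
    ← count_two_mul_of_periodic (periodic_dvd_mul_succ n)]
  exact count_congr (fun r => Nat.mul_dvd_mul_iff_left two_pos) _

theorem squareRootsOfOne_eq (b : ℕ) :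
    (squareRootsOfOne b : ℝ) = coprimeFactorizations b -
      (if 2 ∣ b then (coprimeFactorizations (b / 2) : ℝ) else 0) +
      2 * (if 4 ∣ b then (coprimeFactorizations (b / 4) : ℝ) else 0) := by
  by_cases h4 : 4 ∣ b
  · obtain ⟨n, rfl⟩ := h4
    rw [if_pos (by omega), if_pos (by omega), show 4 * n / 2 = 2 * n by omega,
      show 4 * n / 4 = n by omega, squareRootsOfOne_four_mul, coprimeFactorizations_four_mul]
    push_cast
    ring
  by_cases h2 : 2 ∣ b
  · obtain ⟨n, rfl⟩ := h2
    have odd : Odd n := Nat.odd_iff.2 (by omega)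
    rw [if_pos (by omega), if_neg h4, show 2 * n / 2 = n by omega,
      squareRootsOfOne_two_mul_of_odd odd, coprimeFactorizations_two_mul_of_odd odd]
    push_cast
    ring
  · rw [if_neg h2, if_neg h4, squareRootsOfOne_of_odd (Nat.odd_iff.2 (by omega))]
    ring

theorem count_dvd_sq_sub_sq_sub_four_of_even {b : ℕ} (hb : Even b) :
    Nat.count (fun t : ℕ => (4 * b : ℤ) ∣ (t : ℤ) ^ 2 - b ^ 2 - 4) (2 * b) =
      squareRootsOfOne b := by
  obtain ⟨n, rfl⟩ := even_iff_exists_two_mul.1 hb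
  rcases n.eq_zero_or_pos with rfl | n_pos
  · rfl
  have odd_not_root (r : ℕ) :
      ¬ (4 * (2 * n : ℕ) : ℤ) ∣ ((2 * r + 1 : ℕ) : ℤ) ^ 2 - (2 * n : ℕ) ^ 2 - 4 := by
    intro h
    have two_dvd := (Dvd.intro (4 * n : ℤ) (by push_cast; ring)).trans h (a := 2)
    push_cast at two_dvd
    ring_nf at two_dvd
    omega
  rw [count_two_mul_of_not_odd odd_not_root, squareRootsOfOne,
    ← count_comp_of_periodic (periodic_dvd_sq_sub (2 * n) 1) (by omega) (f := fun r => r + n)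
      fun x y h => h.add_right_cancel' n]
  refine count_congr (fun r => ?_) _
  have shift : ((2 * r : ℕ) : ℤ) ^ 2 - (2 * n : ℕ) ^ 2 - 4 =
      4 * (((r + n : ℕ) : ℤ) ^ 2 - 1 - (2 * n : ℕ) * (r + n)) := by
    push_cast
    ring
  rw [shift, mul_dvd_mul_iff_left four_ne_zero, dvd_sub_left (dvd_mul_right _ _)]

theorem count_dvd_sq_sub_sq_sub_four_of_odd {b : ℕ} (hb : Odd b) :
    Nat.count (fun t : ℕ => (4 * b : ℤ) ∣ (t : ℤ) ^ 2 - b ^ 2 - 4) (2 * b) =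
      squareRootsOfOne b := by
  have even_not_root (r : ℕ) : ¬ (4 * b : ℤ) ∣ ((2 * r : ℕ) : ℤ) ^ 2 - b ^ 2 - 4 := by
    intro h
    obtain ⟨n, rfl⟩ := hb
    have two_dvd := (Dvd.intro (2 * (2 * n + 1) : ℤ) (by push_cast; ring)).trans h (a := 2)
    push_cast at two_dvd
    ring_nf at two_dvd
    omega
  have odd_root_iff (r : ℕ) : (4 * b : ℤ) ∣ ((2 * r + 1 : ℕ) : ℤ) ^ 2 - b ^ 2 - 4 ↔
      (b : ℤ) ∣ ((2 * r + 1 : ℕ) : ℤ) ^ 2 - 4 := by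
    obtain ⟨n, hn⟩ := hb
    have factor : ((2 * r + 1 : ℕ) : ℤ) ^ 2 - b ^ 2 - 4 =
        4 * (r ^ 2 + r - n ^ 2 - n - 1) := by
      rw [hn]
      push_cast
      ring
    rw [factor, mul_dvd_mul_iff_left four_ne_zero, ← dvd_four_mul_iff_of_odd ⟨n, hn⟩, ← factor,
      sub_right_comm, sq (b : ℤ), dvd_sub_left (dvd_mul_right _ _)]
  rw [count_two_mul_of_not_even even_not_root, count_congr odd_root_iff,
    count_comp_of_periodic (periodic_dvd_sq_sub b 4) hb.pos (modEq_of_two_mul_add_modEq hb 1),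
    ← count_comp_of_periodic (periodic_dvd_sq_sub b 4) hb.pos (modEq_of_two_mul_add_modEq hb 0)]
  refine count_congr (fun r => ?_) b
  rw [← dvd_four_mul_iff_of_odd hb (x := (r : ℤ) ^ 2 - 1)]
  push_cast
  ring_nf

theorem count_dvd_sq_sub_sq_sub_four (b : ℕ) :
    Nat.count (fun t : ℕ => (4 * b : ℤ) ∣ (t : ℤ) ^ 2 - b ^ 2 - 4) (2 * b) =
      squareRootsOfOne b :=
  b.even_or_odd.elim count_dvd_sq_sub_sq_sub_four_of_even count_dvd_sq_sub_sq_sub_four_of_odd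

theorem periodic_dvd_sq_sub_sq_sub_four (b : ℕ) :
    Function.Periodic (fun t : ℕ => (4 * b : ℤ) ∣ (t : ℤ) ^ 2 - b ^ 2 - 4) (2 * b) := by
  intro t
  have shift : ((t + 2 * b : ℕ) : ℤ) ^ 2 - b ^ 2 - 4 =
      (t : ℤ) ^ 2 - b ^ 2 - 4 + 4 * b * (t + b) := by
    push_cast
    ring
  beta_reduce
  rw [shift, dvd_add_left (dvd_mul_right _ _)]

theorem coprimeFactorizations_le_card_divisors (n : ℕ) :
    coprimeFactorizations n ≤ #n.divisors := by
  rw [← card_map, Nat.map_div_right_divisors]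
  exact card_filter_le _ _

theorem squareRootsOfOne_le (b : ℕ) : squareRootsOfOne b ≤ 2 * #b.divisors := by
  rcases b.eq_zero_or_pos with rfl | b_pos
  · rfl
  have le_of_dvd {n : ℕ} (h : n ∣ b) : coprimeFactorizations n ≤ #b.divisors :=
    (coprimeFactorizations_le_card_divisors n).trans
      (card_le_card (Nat.divisors_subset_of_dvd b_pos.ne' h))
  by_cases h4 : 4 ∣ b
  · obtain ⟨n, rfl⟩ := h4
    rw [squareRootsOfOne_four_mul]
    exact Nat.mul_le_mul_left 2 (le_of_dvd (dvd_mul_left n 4))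
  refine le_trans ?_ (Nat.le_mul_of_pos_left _ two_pos)
  by_cases h2 : 2 ∣ b
  · obtain ⟨n, rfl⟩ := h2
    rw [squareRootsOfOne_two_mul_of_odd (Nat.odd_iff.2 (by omega))]
    exact le_of_dvd (dvd_mul_left n 2)
  · rw [squareRootsOfOne_of_odd (Nat.odd_iff.2 (by omega))]
    exact le_of_dvd dvd_rfl

theorem sum_squareRootsOfOne_le (N : ℕ) :
    ∑ b ∈ Icc 1 N, (squareRootsOfOne b : ℝ) ≤ 2 * (N * (1 + Real.log N)) := by
  have sum_divisors : ∑ b ∈ Icc 1 N, (#b.divisors : ℝ) ≤ N * harmonic N := by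
    have swap : ∑ b ∈ Icc 1 N, #b.divisors = ∑ b ∈ Icc 1 N, N / b := by
      simpa only [sigma_zero_apply] using! sum_Ioc_sigma0_eq_sum_div N
    rw [← Nat.cast_sum, swap, Nat.cast_sum, cast_harmonic_eq_sum, mul_sum]
    refine sum_le_sum fun b _ => ?_
    rw [mul_one_div]
    exact Nat.cast_div_le
  calc ∑ b ∈ Icc 1 N, (squareRootsOfOne b : ℝ)
      ≤ ∑ b ∈ Icc 1 N, 2 * (#b.divisors : ℝ) := by
        gcongr with b
        exact_mod_cast squareRootsOfOne_le b
    _ ≤ 2 * (N * (1 + Real.log N)) := by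
        rw [← mul_sum]
        gcongr
        exact sum_divisors.trans (by gcongr; exact harmonic_le_one_add_log N)

theorem sum_Icc_ite_dvd {k : ℕ} (hk : 0 < k) (N : ℕ) (f : ℕ → ℝ) :
    ∑ b ∈ Icc 1 N, (if k ∣ b then f b else 0) = ∑ n ∈ Icc 1 (N / k), f (k * n) := by
  rw [← sum_filter]
  refine (sum_nbij' (fun n => k * n) (fun b => b / k) ?_ ?_ ?_ ?_ fun _ _ => rfl).symm
  · intro n hn
    simp only [mem_Icc, mem_filter, Nat.le_div_iff_mul_le hk, mul_comm n k, dvd_mul_right,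
      and_true] at hn ⊢
    exact ⟨Nat.mul_pos hk hn.1, hn.2⟩
  · intro b hb
    simp only [mem_filter, mem_Icc] at hb ⊢
    exact ⟨Nat.div_pos (Nat.le_of_dvd hb.1.1 hb.2) hk, Nat.div_le_div_right hb.1.2⟩
  · exact fun n _ => Nat.mul_div_cancel_left n hk
  · exact fun b hb => Nat.mul_div_cancel' (mem_filter.1 hb).2

theorem sum_squareRootsOfOne_div_eq (N : ℕ) :
    ∑ b ∈ Icc 1 N, (squareRootsOfOne b : ℝ) / b =
      ∑ n ∈ Icc 1 N, (coprimeFactorizations n : ℝ) / n -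
      (∑ n ∈ Icc 1 (N / 2), (coprimeFactorizations n : ℝ) / n) / 2 +
      (∑ n ∈ Icc 1 (N / 4), (coprimeFactorizations n : ℝ) / n) / 2 := by
  have pointwise (b : ℕ) : (squareRootsOfOne b : ℝ) / b =
      (coprimeFactorizations b : ℝ) / b -
      (if 2 ∣ b then (coprimeFactorizations (b / 2) : ℝ) / b else 0) +
      (if 4 ∣ b then 2 * (coprimeFactorizations (b / 4) : ℝ) / b else 0) := by
    rw [squareRootsOfOne_eq]
    split_ifs <;> ring
  simp only [pointwise, sum_add_distrib, sum_sub_distrib]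
  rw [sum_Icc_ite_dvd two_pos N fun b => (coprimeFactorizations (b / 2) : ℝ) / b,
    sum_Icc_ite_dvd four_pos N fun b => 2 * (coprimeFactorizations (b / 4) : ℝ) / b,
    sum_div, sum_div]
  congr 1
  · congr! 2 with n
    rw [Nat.mul_div_cancel_left _ two_pos]
    push_cast
    ring
  · refine sum_congr rfl fun n _ => ?_
    rw [Nat.mul_div_cancel_left _ four_pos]
    push_cast
    ring

end RootCounts

section LogAsymptotics

variable {α : Type*} {l : Filter α} {f g : α → ℝ} {c : ℝ}

theorem log_sub_log_isBigO_one (hfg : f =Θ[l] g) (hf : ∀ᶠ x in l, 0 < f x)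
    (hg : ∀ᶠ x in l, 0 < g x) :
    (fun x => Real.log (f x) - Real.log (g x)) =O[l] fun _ => (1 : ℝ) := by
  obtain ⟨C, C_pos, f_le⟩ := hfg.1.exists_pos
  obtain ⟨D, D_pos, g_le⟩ := hfg.2.exists_pos
  refine .of_bound (max (Real.log C) (Real.log D)) ?_
  filter_upwards [hf, hg, f_le.bound, g_le.bound] with x fx_pos gx_pos fx_le gx_le
  rw [Real.norm_of_nonneg fx_pos.le, Real.norm_of_nonneg gx_pos.le] at fx_le gx_le
  have log_f_le := Real.log_le_log fx_pos fx_le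
  have log_g_le := Real.log_le_log gx_pos gx_le
  rw [Real.log_mul C_pos.ne' gx_pos.ne'] at log_f_le
  rw [Real.log_mul D_pos.ne' fx_pos.ne'] at log_g_le
  rw [norm_one, mul_one, Real.norm_eq_abs, abs_sub_le_iff]
  exact ⟨by linarith [le_max_left (Real.log C) (Real.log D)],
    by linarith [le_max_right (Real.log C) (Real.log D)]⟩

theorem one_isBigO_one_add_log (hg : Tendsto g l atTop) :
    (fun _ => (1 : ℝ)) =O[l] fun x => 1 + Real.log (g x) := by
  refine .of_bound 1 ?_
  filter_upwards [hg.eventually_ge_atTop 1] with x hx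
  rw [one_mul, norm_one]
  exact (le_add_of_nonneg_right (Real.log_nonneg hx)).trans (Real.le_norm_self _)

theorem log_sq_sub_log_sq_isBigO (hg : Tendsto g l atTop)
    (hfg : (fun x => Real.log (f x) - Real.log (g x)) =O[l] fun _ => (1 : ℝ)) :
    (fun x => Real.log (f x) ^ 2 - Real.log (g x) ^ 2) =O[l] fun x => 1 + Real.log (g x) := by
  have log_g : (fun x => Real.log (g x)) =O[l] fun x => 1 + Real.log (g x) := by
    simpa using (isBigO_refl (fun x => 1 + Real.log (g x)) l).sub (one_isBigO_one_add_log hg)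
  have log_sum : (fun x => Real.log (f x) - Real.log (g x) + 2 * Real.log (g x)) =O[l]
      fun x => 1 + Real.log (g x) :=
    (hfg.trans (one_isBigO_one_add_log hg)).add (log_g.const_mul_left 2)
  exact (hfg.mul log_sum).congr (fun x => by ring) fun x => one_mul _

theorem isEquivalent_const_mul_of_sub_isBigO_one (hc : 0 < c) (hg : Tendsto g l atTop)
    (hfg : (fun x => f x - c * g x) =O[l] fun _ => (1 : ℝ)) :
    IsEquivalent l f fun x => c * g x :=
  hfg.trans_isLittleO (isLittleO_const_left.2
    (.inr (tendsto_norm_atTop_atTop.comp (hg.const_mul_atTop hc))))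

theorem isTheta_of_sub_const_mul_isBigO_one (hc : 0 < c) (hg : Tendsto g l atTop)
    (hfg : (fun x => f x - c * g x) =O[l] fun _ => (1 : ℝ)) :
    f =Θ[l] g :=
  (isEquivalent_const_mul_of_sub_isBigO_one hc hg hfg).isTheta.trans
    ((isTheta_refl g l).const_mul_left hc.ne')

theorem tendsto_atTop_of_sub_const_mul_isBigO_one (hc : 0 < c) (hg : Tendsto g l atTop)
    (hfg : (fun x => f x - c * g x) =O[l] fun _ => (1 : ℝ)) :
    Tendsto f l atTop :=
  (isEquivalent_const_mul_of_sub_isBigO_one hc hg hfg).symm.tendsto_atTop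
    (hg.const_mul_atTop hc)

theorem log_sub_log_isBigO_one_of_sub_const_mul (hc : 0 < c) (hg : Tendsto g l atTop)
    (hfg : (fun x => f x - c * g x) =O[l] fun _ => (1 : ℝ)) :
    (fun x => Real.log (f x) - Real.log (g x)) =O[l] fun _ => (1 : ℝ) :=
  log_sub_log_isBigO_one (isTheta_of_sub_const_mul_isBigO_one hc hg hfg)
    ((tendsto_atTop_of_sub_const_mul_isBigO_one hc hg hfg).eventually_gt_atTop 0)
    (hg.eventually_gt_atTop 0)

theorem mul_log_sq_sub_isBigO (hc : 0 < c) (hg : Tendsto g l atTop)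
    (hfg : (fun x => f x - c * g x) =O[l] fun _ => (1 : ℝ)) :
    (fun x => f x * Real.log (f x) ^ 2 - c * (g x * Real.log (g x) ^ 2)) =O[l]
      fun x => g x * (1 + Real.log (g x)) := by
  have log_sq_sub := log_sq_sub_log_sq_isBigO hg
    (log_sub_log_isBigO_one_of_sub_const_mul hc hg hfg)
  have one_le_g : (fun _ => (1 : ℝ)) =O[l] g :=
    (isLittleO_const_left.2 (.inr (tendsto_norm_atTop_atTop.comp hg))).isBigO
  have log_sq_g : (fun x => Real.log (g x) ^ 2) =O[l] fun x => g x * (1 + Real.log (g x)) := by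
    simpa using! (((Real.isLittleO_pow_log_id_atTop (n := 2)).isBigO).comp_tendsto hg).mul
      (one_isBigO_one_add_log hg)
  have log_sq_f : (fun x => Real.log (f x) ^ 2) =O[l] fun x => g x * (1 + Real.log (g x)) := by
    simpa using! (one_le_g.mul log_sq_sub).add log_sq_g
  refine ((hfg.mul log_sq_f).congr_right fun x => one_mul _).add
    (((isBigO_refl g l).mul log_sq_sub).const_mul_left c) |>.congr_left fun x => ?_
  ring

theorem natDiv_sub_const_mul_isBigO_one (k : ℕ) :
    (fun N : ℕ => ((N / k : ℕ) : ℝ) - (1 / k : ℝ) * N) =O[atTop] fun _ => (1 : ℝ) := by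
  refine .of_bound 1 (.of_forall fun N => ?_)
  rw [one_div_mul_eq_div, ← Nat.floor_div_eq_div (K := ℝ), norm_one, mul_one, Real.norm_eq_abs,
    abs_sub_comm, abs_of_nonneg (sub_nonneg.2 (Nat.floor_le (by positivity)))]
  linarith [Nat.lt_floor_add_one ((N : ℝ) / k)]

end LogAsymptotics

theorem sum_squareRootsOfOne_div_isBigO :
    (fun N : ℕ => ∑ b ∈ Icc 1 N, (squareRootsOfOne b : ℝ) / b - 3 / Real.pi ^ 2 * Real.log N ^ 2)
      =O[atTop] fun N : ℕ => 1 + Real.log N := by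
  have rescaled {k : ℕ} (hk : 0 < k) :
      (fun N : ℕ => ∑ n ∈ Icc 1 (N / k), (coprimeFactorizations n : ℝ) / n -
        3 / Real.pi ^ 2 * Real.log N ^ 2) =O[atTop] fun N : ℕ => 1 + Real.log N := by
    have log_sub := log_sub_log_isBigO_one_of_sub_const_mul (c := 1 / k) (by positivity)
      tendsto_natCast_atTop_atTop (natDiv_sub_const_mul_isBigO_one k)
    have log_bound : (fun N : ℕ => 1 + Real.log (N / k : ℕ)) =O[atTop]
        fun N : ℕ => 1 + Real.log N := by
      refine ((log_sub.trans (one_isBigO_one_add_log tendsto_natCast_atTop_atTop)).add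
        (isBigO_refl _ _)).congr_left fun N => by ring
    refine (((sum_coprimeFactorizations_div_isBigO.comp_tendsto
      (Nat.tendsto_div_const_atTop hk.ne')).trans log_bound).add
      ((log_sq_sub_log_sq_isBigO tendsto_natCast_atTop_atTop log_sub).const_mul_left
        (3 / Real.pi ^ 2))).congr_left fun N => ?_
    simp only [Function.comp_apply]
    ring
  refine ((sum_coprimeFactorizations_div_isBigO.sub
    ((rescaled two_pos).const_mul_left (1 / 2))).add
    ((rescaled four_pos).const_mul_left (1 / 2))).congr_left fun N => ?_
  rw [sum_squareRootsOfOne_div_eq]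
  ring

section LatticePairs

/-- The pairs `(b, a)` of positive integers with `b < a ≤ X` that are related by `P`. -/
def pairsBelow (P : ℕ → ℕ → Prop) [∀ b, DecidablePred (P b)] (X : ℕ) : Finset (ℕ × ℕ) :=
  {p ∈ Icc 1 X ×ˢ Icc 1 X | p.1 < p.2 ∧ P p.1 p.2}

variable {P : ℕ → ℕ → Prop} [∀ b, DecidablePred (P b)]

theorem card_pairsBelow (X : ℕ) :
    #(pairsBelow P X) = ∑ b ∈ Icc 1 X, (Nat.count (P b) (X + 1) - Nat.count (P b) (b + 1)) := by
  rw [pairsBelow, card_filter, sum_product]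
  refine sum_congr rfl fun b hb => ?_
  rw [← card_filter, Nat.count_eq_card_filter_range, Nat.count_eq_card_filter_range,
    ← card_sdiff_of_subset (filter_subset_filter _ (range_mono (by grind)))]
  congr 1
  grind

theorem abs_count_sub_count_sub_le {p : ℕ → Prop} [DecidablePred p] {q b X : ℕ} (hq : 0 < q)
    (hp : Function.Periodic p q) (hbq : b ≤ q) (hbX : b ≤ X) :
    |((Nat.count p (X + 1) - Nat.count p (b + 1) : ℕ) : ℝ) - X / q * Nat.count p q| ≤
      3 * Nat.count p q := by
  have count_X := abs_le.1 (abs_count_sub_div_mul_le hp hq (X + 1))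
  have count_b := abs_le.1 (abs_count_sub_div_mul_le hp hq (b + 1))
  have b_le : (b : ℝ) / q * Nat.count p q ≤ Nat.count p q :=
    mul_le_of_le_one_left (by positivity)
      (div_le_one_of_le₀ (by exact_mod_cast hbq) (by positivity))
  have b_nonneg : 0 ≤ (b : ℝ) / q * Nat.count p q := by positivity
  rw [Nat.cast_succ, add_div, add_mul] at count_X count_b
  rw [Nat.cast_sub (Nat.count_monotone p (by omega)), abs_le]
  constructor <;> linarith

theorem abs_card_pairsBelow_sub_le {k : ℕ} (hk : 0 < k)
    (hP : ∀ b, Function.Periodic (P b) (k * b)) (X : ℕ) :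
    |(#(pairsBelow P X) : ℝ) - X / k * ∑ b ∈ Icc 1 X, (Nat.count (P b) (k * b) : ℝ) / b| ≤
      3 * ∑ b ∈ Icc 1 X, (Nat.count (P b) (k * b) : ℝ) := by
  rw [card_pairsBelow, Nat.cast_sum, mul_sum, mul_sum, ← sum_sub_distrib]
  refine (abs_sum_le_sum_abs _ _).trans (sum_le_sum fun b hb => ?_)
  obtain ⟨b_pos, b_le⟩ := mem_Icc.1 hb
  rw [div_mul_div_comm, ← Nat.cast_mul k b, mul_div_right_comm]
  exact abs_count_sub_count_sub_le (Nat.mul_pos hk b_pos) (hP b)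
    (Nat.le_mul_of_pos_left b hk) b_le

theorem card_pairsBelow_isBigO {k : ℕ} (hk : 0 < k)
    (hP : ∀ b, Function.Periodic (P b) (k * b))
    (hcount : ∀ b, Nat.count (P b) (k * b) = squareRootsOfOne b) :
    (fun X : ℕ => (#(pairsBelow P X) : ℝ) - 3 / Real.pi ^ 2 / k * (X * Real.log X ^ 2))
      =O[atTop] fun X : ℕ => X * (1 + Real.log X) := by
  have card_sub : (fun X : ℕ => (#(pairsBelow P X) : ℝ) -
      X / k * ∑ b ∈ Icc 1 X, (squareRootsOfOne b : ℝ) / b) =O[atTop]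
      fun X : ℕ => X * (1 + Real.log X) := by
    refine .of_bound 6 (.of_forall fun X => ?_)
    have bound := abs_card_pairsBelow_sub_le hk hP X
    simp only [hcount] at bound
    have sum_le := sum_squareRootsOfOne_le X
    rw [Real.norm_eq_abs]
    linarith [Real.le_norm_self (X * (1 + Real.log X))]
  have main := (isBigO_refl (fun X : ℕ => (X : ℝ)) atTop).mul sum_squareRootsOfOne_div_isBigO
  refine (card_sub.add (main.const_mul_left (1 / k))).congr_left fun X => ?_
  ring

/-- The pairs `(b, a)` with `b < a ≤ X` and `a² - 1` divisible by `b`; up to the signs and the order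
of the factors of `a² - 1` they parametrize the matrices of trace `2 a` inverted by `W`. -/
def firstKindPairs (X : ℕ) : Finset (ℕ × ℕ) :=
  pairsBelow (fun b a => (b : ℤ) ∣ (a : ℤ) ^ 2 - 1) X

/-- The pairs `(b, t)` with `b < t ≤ T` and `t² - 4 ≡ b²` modulo `4 b`; up to the signs and the
order of the factors of `t² - 4` they parametrize the matrices of trace `t` inverted by `W₁`. -/
def secondKindPairs (T : ℕ) : Finset (ℕ × ℕ) :=
  pairsBelow (fun b t => (4 * b : ℤ) ∣ (t : ℤ) ^ 2 - b ^ 2 - 4) T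

theorem card_firstKindPairs_isBigO :
    (fun X : ℕ => (#(firstKindPairs X) : ℝ) - 3 / Real.pi ^ 2 * (X * Real.log X ^ 2))
      =O[atTop] fun X : ℕ => X * (1 + Real.log X) := by
  simpa [firstKindPairs] using card_pairsBelow_isBigO one_pos
    (P := fun b a => (b : ℤ) ∣ (a : ℤ) ^ 2 - 1)
    (fun b => by simpa using periodic_dvd_sq_sub b 1) fun b => by simp [squareRootsOfOne]

theorem card_secondKindPairs_isBigO :
    (fun T : ℕ => (#(secondKindPairs T) : ℝ) - 3 / Real.pi ^ 2 / 2 * (T * Real.log T ^ 2))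
      =O[atTop] fun T : ℕ => T * (1 + Real.log T) := by
  simpa only [secondKindPairs, Nat.cast_ofNat] using card_pairsBelow_isBigO two_pos
    periodic_dvd_sq_sub_sq_sub_four count_dvd_sq_sub_sq_sub_four

theorem card_firstKindPairs_half_isBigO :
    (fun T : ℕ => (#(firstKindPairs (T / 2)) : ℝ) - 3 / Real.pi ^ 2 / 2 * (T * Real.log T ^ 2))
      =O[atTop] fun T : ℕ => T * (1 + Real.log T) := by
  have error_le : (fun T : ℕ => ((T / 2 : ℕ) : ℝ) * (1 + Real.log (T / 2 : ℕ))) =O[atTop]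
      fun T : ℕ => T * (1 + Real.log T) := by
    refine .of_bound 1 ?_
    filter_upwards [eventually_ge_atTop 2] with T hT
    have half_pos : 0 < ((T / 2 : ℕ) : ℝ) := by exact_mod_cast Nat.div_pos hT two_pos
    have half_le : ((T / 2 : ℕ) : ℝ) ≤ T := by exact_mod_cast T.div_le_self 2
    have log_nonneg := Real.log_natCast_nonneg (T / 2)
    rw [one_mul, Real.norm_of_nonneg (mul_nonneg half_pos.le (by linarith [log_nonneg]))]
    exact le_trans (by gcongr) (Real.le_norm_self _)
  have half := (card_firstKindPairs_isBigO.comp_tendsto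
    (Nat.tendsto_div_const_atTop two_ne_zero)).trans error_le
  have main := mul_log_sq_sub_isBigO (c := 1 / 2) (by norm_num) tendsto_natCast_atTop_atTop
    (natDiv_sub_const_mul_isBigO_one 2)
  refine (half.add (main.const_mul_left (3 / Real.pi ^ 2))).congr_left fun T => ?_
  simp only [Function.comp_apply]
  ring

theorem card_pairs_isBigO :
    (fun T : ℕ => (#(firstKindPairs (T / 2)) : ℝ) + #(secondKindPairs T) -
      3 / Real.pi ^ 2 * (T * Real.log T ^ 2)) =O[atTop] fun T : ℕ => T * (1 + Real.log T) :=
  (card_firstKindPairs_half_isBigO.add card_secondKindPairs_isBigO).congr_left fun T => by ring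

end LatticePairs

end NumberTheory

/-! ### Reflections and centralizers in `SL₂(ℤ)` -/

open Matrix.SpecialLinearGroup (toGL)

section TwoByTwo

variable {A B : SL(2, ℤ)}

theorem sl_two_ext_iff : A = B ↔
    A 0 0 = B 0 0 ∧ A 0 1 = B 0 1 ∧ A 1 0 = B 1 0 ∧ A 1 1 = B 1 1 := by
  simp only [Matrix.SpecialLinearGroup.ext_iff, Fin.forall_fin_two, and_assoc]

theorem sl_two_mul_apply (A B : SL(2, ℤ)) (i j : Fin 2) :
    (A * B) i j = A i 0 * B 0 j + A i 1 * B 1 j := by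
  rw [Matrix.SpecialLinearGroup.coe_mul, mul_apply, Fin.sum_univ_two]

theorem sl_two_det (A : SL(2, ℤ)) : A 0 0 * A 1 1 - A 0 1 * A 1 0 = 1 := by
  rw [← det_fin_two, A.det_coe]

theorem trace_neg_sl (A : SL(2, ℤ)) : (-A).1.trace = -A.1.trace := by
  rw [Matrix.SpecialLinearGroup.coe_neg, trace_neg]

theorem trace_conj_sl (g A : SL(2, ℤ)) : (g * A * g⁻¹).1.trace = A.1.trace := by
  rw [Matrix.SpecialLinearGroup.coe_mul, trace_mul_comm, ← Matrix.SpecialLinearGroup.coe_mul,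
    inv_mul_cancel_left]

theorem apply_zero_one_ne_zero (hA : 2 < |A.1.trace|) : A 0 1 ≠ 0 := by
  intro h01
  have det_A := sl_two_det A
  rw [h01, zero_mul, sub_zero] at det_A
  rw [trace_fin_two] at hA
  rcases Int.eq_one_or_neg_one_of_mul_eq_one' det_A with ⟨h0, h1⟩ | ⟨h0, h1⟩ <;>
    simp [h0, h1] at hA

theorem mul_apply_eq_of_commute (hAB : Commute A B) :
    B 0 1 * A 1 0 = A 0 1 * B 1 0 ∧ B 0 1 * (A 0 0 - A 1 1) = A 0 1 * (B 0 0 - B 1 1) := by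
  have entries := sl_two_ext_iff.1 hAB.eq
  simp only [sl_two_mul_apply] at entries
  exact ⟨by linarith [entries.1], by linarith [entries.2.1]⟩

theorem eq_one_or_eq_neg_one_of_commute (hAB : Commute A B) (hA : A 0 1 ≠ 0)
    (hB : B 0 1 = 0) : B = 1 ∨ B = -1 := by
  obtain ⟨h10, hdiag⟩ := mul_apply_eq_of_commute hAB
  simp only [hB, zero_mul, zero_eq_mul, hA, false_or] at h10 hdiag
  have det_B := sl_two_det B
  rw [hB, zero_mul, sub_zero] at det_B
  rcases Int.eq_one_or_neg_one_of_mul_eq_one' det_B with ⟨h0, h1⟩ | ⟨h0, h1⟩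
  · exact .inl (sl_two_ext_iff.2 (by simp [h0, h1, h10, hB]))
  · exact .inr (sl_two_ext_iff.2 (by simp [h0, h1, h10, hB]))

theorem sq_mul_trace_sq_sub_four_of_commute (hAB : Commute A B) :
    B 0 1 ^ 2 * (A.1.trace ^ 2 - 4) = A 0 1 ^ 2 * (B.1.trace ^ 2 - 4) := by
  obtain ⟨h10, hdiag⟩ := mul_apply_eq_of_commute hAB
  rw [trace_fin_two, trace_fin_two]
  linear_combination (B 0 1 * (A 0 0 - A 1 1) + A 0 1 * (B 0 0 - B 1 1)) * hdiag +
    4 * B 0 1 * A 0 1 * h10 + 4 * B 0 1 ^ 2 * sl_two_det A - 4 * A 0 1 ^ 2 * sl_two_det B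

theorem two_lt_abs_trace_of_commute (hAB : Commute A B) (hA : 2 < |A.1.trace|)
    (h1 : B ≠ 1) (hneg1 : B ≠ -1) : 2 < |B.1.trace| := by
  have A01_ne := apply_zero_one_ne_zero hA
  have B01_ne : B 0 1 ≠ 0 := fun hB =>
    (eq_one_or_eq_neg_one_of_commute hAB A01_ne hB).elim h1 hneg1
  rw [← abs_two, ← sq_lt_sq, ← sub_pos] at hA ⊢
  refine pos_of_mul_pos_right ?_ (sq_nonneg (A 0 1))
  have discr := sq_mul_trace_sq_sub_four_of_commute hAB
  norm_num at discr hA ⊢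
  rw [← discr]
  positivity

end TwoByTwo

section Reflections

/-- The reflection `[[1, 0], [k, -1]]` of `ℤ²`: it is `W` for `k = 0` and `W₁` for `k = 1`. -/
def shearReflection (k : ℤ) : GL (Fin 2) ℤ :=
  have mul_self : !![1, 0; k, -1] * !![1, 0; k, -1] = 1 := by
    simp [one_fin_two]
  ⟨!![1, 0; k, -1], !![1, 0; k, -1], mul_self, mul_self⟩

theorem coe_shearReflection (k : ℤ) :
    (shearReflection k : Matrix (Fin 2) (Fin 2) ℤ) = !![1, 0; k, -1] := rfl

theorem shearReflection_mul_self (k : ℤ) : shearReflection k * shearReflection k = 1 :=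
  mul_inv_cancel (shearReflection k)

theorem det_shearReflection (k : ℤ) : (shearReflection k).1.det = -1 := by
  simp [coe_shearReflection, det_fin_two_of]

/-- `A` is inverted under conjugation by the reflection `[[1, 0], [k, -1]]`. -/
def InvertedBy (k : ℤ) (A : SL(2, ℤ)) : Prop :=
  SemiconjBy (shearReflection k) (toGL A) (toGL A)⁻¹

variable {k : ℤ} {A B : SL(2, ℤ)}

theorem coe_inv_fin_two (A : SL(2, ℤ)) :
    ((A⁻¹ : SL(2, ℤ)) : Matrix (Fin 2) (Fin 2) ℤ) = !![A 1 1, -A 0 1; -A 1 0, A 0 0] := by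
  rw [Matrix.SpecialLinearGroup.coe_inv, adjugate_fin_two]

theorem shearReflection_mul_coe (k : ℤ) (A : SL(2, ℤ)) :
    (shearReflection k : Matrix (Fin 2) (Fin 2) ℤ) * A =
      !![A 0 0, A 0 1; k * A 0 0 - A 1 0, k * A 0 1 - A 1 1] := by
  rw [coe_shearReflection, eta_fin_two (A : Matrix (Fin 2) (Fin 2) ℤ), mul_fin_two]
  simp [sub_eq_add_neg]

theorem coe_inv_mul_shearReflection (k : ℤ) (A : SL(2, ℤ)) :
    ((A⁻¹ : SL(2, ℤ)) : Matrix (Fin 2) (Fin 2) ℤ) * shearReflection k =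
      !![A 1 1 - k * A 0 1, A 0 1; k * A 0 0 - A 1 0, -A 0 0] := by
  rw [coe_inv_fin_two, coe_shearReflection, mul_fin_two]
  simp [sub_eq_neg_add, mul_comm, add_comm]

theorem invertedBy_iff_coe : InvertedBy k A ↔ (shearReflection k : Matrix (Fin 2) (Fin 2) ℤ) * A =
    ((A⁻¹ : SL(2, ℤ)) : Matrix (Fin 2) (Fin 2) ℤ) * shearReflection k := by
  rw [InvertedBy, SemiconjBy, ← map_inv, Units.ext_iff]
  rfl

theorem invertedBy_iff : InvertedBy k A ↔ A 1 1 = A 0 0 + k * A 0 1 := by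
  rw [invertedBy_iff_coe, shearReflection_mul_coe, coe_inv_mul_shearReflection]
  simp only [← ext_iff, Fin.forall_fin_two, of_apply, cons_val', cons_val_zero, cons_val_one,
    cons_val_fin_one, and_true, true_and]
  exact ⟨fun h => by linarith [h.1], fun h => ⟨by linarith, by linarith⟩⟩

theorem InvertedBy.of_commute (hA : InvertedBy k A) (hAB : Commute A B) (h01 : A 0 1 ≠ 0) :
    InvertedBy k B := by
  rw [invertedBy_iff] at hA ⊢
  refine mul_left_cancel₀ h01 ?_
  linear_combination (mul_apply_eq_of_commute hAB).2 + B 0 1 * hA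

theorem InvertedBy.neg (hA : InvertedBy k A) : InvertedBy k (-A) := by
  rw [invertedBy_iff] at hA ⊢
  simp only [Matrix.SpecialLinearGroup.coe_neg, neg_apply, hA]
  ring

end Reflections

section ReflectionClasses

theorem eq_of_semiconjBy_shearReflection {g : SL(2, ℤ)} {j k : Fin 2}
    (h : SemiconjBy (toGL g) (shearReflection j) (shearReflection k)) :
    j = k ∧ (g = 1 ∨ g = -1) := by
  have mat_eq : (g : Matrix (Fin 2) (Fin 2) ℤ) * !![1, 0; (j : ℤ), -1] =
      shearReflection k * g := congrArg Units.val h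
  rw [shearReflection_mul_coe, eta_fin_two (g : Matrix (Fin 2) (Fin 2) ℤ), mul_fin_two] at mat_eq
  simp only [← ext_iff, Fin.forall_fin_two, of_apply, cons_val', cons_val_zero, cons_val_one,
    cons_val_fin_one] at mat_eq
  obtain ⟨⟨-, h01⟩, h10, -⟩ := mat_eq
  have g01 : g 0 1 = 0 := by linarith
  have det_g := sl_two_det g
  rw [g01, zero_mul, sub_zero] at det_g
  rcases Int.eq_one_or_neg_one_of_mul_eq_one' det_g with ⟨g00, g11⟩ | ⟨g00, g11⟩ <;>
    rw [g00, g11] at h10 <;>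
    obtain rfl : j = k := Fin.ext (by omega)
  all_goals have g10 : g 1 0 = 0 := by linarith
  · exact ⟨rfl, .inl (sl_two_ext_iff.2 (by simp [g00, g01, g10, g11]))⟩
  · exact ⟨rfl, .inr (sl_two_ext_iff.2 (by simp [g00, g01, g10, g11]))⟩

theorem semiconjBy_shearReflection_add_two_mul (k m : ℤ) :
    ∃ g : SL(2, ℤ), SemiconjBy (toGL g) (shearReflection k) (shearReflection (k + 2 * m)) := by
  refine ⟨⟨!![1, 0; m, 1], by simp⟩, Units.ext ?_⟩
  change !![1, 0; m, 1] * !![1, 0; k, -1] = !![1, 0; k + 2 * m, -1] * !![1, 0; m, 1]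
  rw [mul_fin_two, mul_fin_two]
  ring_nf

theorem exists_eq_shearReflection {σ : GL (Fin 2) ℤ} (h00 : σ.1 0 0 = 1) (h01 : σ.1 0 1 = 0)
    (hdet : σ.1.det = -1) : ∃ k, σ = shearReflection k := by
  refine ⟨σ.1 1 0, Units.ext ?_⟩
  rw [det_fin_two, h00, h01, one_mul, zero_mul, sub_zero] at hdet
  conv_lhs => rw [eta_fin_two σ.1, h00, h01, hdet]
  rfl

theorem exists_isCoprime_vecMul_eq {σ : Matrix (Fin 2) (Fin 2) ℤ} (hσ : σ * σ = 1)
    (hdet : σ.det = -1) : ∃ v : Fin 2 → ℤ, IsCoprime (v 0) (v 1) ∧ v ᵥ* σ = v := by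
  have one_add_ne : 1 + σ ≠ 0 := by
    intro h
    rw [eq_neg_of_add_eq_zero_right h, det_neg, det_one] at hdet
    norm_num at hdet
  obtain ⟨i, hi⟩ := Function.ne_iff.1 one_add_ne
  have fixed : (1 + σ) i ᵥ* σ = (1 + σ) i := by
    rw [← mul_apply_eq_vecMul, add_mul, one_mul, hσ, add_comm]
  have gcd_pos : 0 < Int.gcd ((1 + σ) i 0) ((1 + σ) i 1) := by
    refine Nat.pos_of_ne_zero fun h => hi (funext fun j => ?_)
    obtain ⟨h0, h1⟩ := Int.gcd_eq_zero_iff.1 h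
    fin_cases j <;> assumption
  obtain ⟨a, b, coprime, ha, hb⟩ := Int.exists_gcd_one gcd_pos
  refine ⟨![a, b], Int.isCoprime_iff_gcd_eq_one.2 coprime, ?_⟩
  have row_eq : (1 + σ) i = (Int.gcd ((1 + σ) i 0) ((1 + σ) i 1) : ℤ) • ![a, b] := by
    funext j
    fin_cases j <;> simpa [mul_comm]
  rw [row_eq, smul_vecMul] at fixed
  exact smul_right_injective _ (Int.natCast_ne_zero.2 gcd_pos.ne') fixed

theorem exists_semiconjBy_shearReflection {σ : GL (Fin 2) ℤ} (hσ : σ * σ = 1)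
    (hdet : σ.1.det = -1) :
    ∃ (g : SL(2, ℤ)) (j : Fin 2), SemiconjBy (toGL g) σ (shearReflection j) := by
  obtain ⟨v, coprime, fixed⟩ := exists_isCoprime_vecMul_eq (congrArg Units.val hσ) hdet
  obtain ⟨g, hg0, hg1⟩ := coprime.exists_SL2_row 0
  have row_g : (toGL g).1 0 = v := by
    funext j
    fin_cases j <;> assumption
  have row_conj : (toGL g * σ * (toGL g)⁻¹).1 0 = (1 : Matrix (Fin 2) (Fin 2) ℤ) 0 := by
    rw [Units.val_mul, Units.val_mul, mul_apply_eq_vecMul, mul_apply_eq_vecMul, row_g, fixed,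
      ← row_g, ← mul_apply_eq_vecMul, Units.mul_inv]
  have det_conj : (toGL g * σ * (toGL g)⁻¹).1.det = -1 := by
    rw [Units.val_mul, Units.val_mul, det_mul_comm, ← mul_assoc, Units.inv_mul, one_mul, hdet]
  obtain ⟨k, hk⟩ := exists_eq_shearReflection (congrFun row_conj 0) (congrFun row_conj 1) det_conj
  have k_mod_two : k + 2 * -(k / 2) = (k % 2).toNat := by lia
  obtain ⟨u, hu⟩ := k_mod_two ▸ semiconjBy_shearReflection_add_two_mul k (-(k / 2))
  exact ⟨u * g, ⟨(k % 2).toNat, by lia⟩, map_mul toGL u g ▸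
    SemiconjBy.mul_left hu (mul_inv_eq_iff_eq_mul.1 hk)⟩

end ReflectionClasses

section Centralizer

theorem exists_forall_eq_zsmul_of_isolated_zero {G : Type*} [AddGroup G] (f : G →+ ℝ) {ε : ℝ}
    (hε : 0 < ε) (hf : ∀ x, 0 < f x → ε ≤ f x) : ∃ c, ∀ x, ∃ n : ℤ, f x = f (n • c) := by
  have isolated : Disjoint (f.range : Set ℝ) (Set.Ioo 0 ε) := by
    rw [Set.disjoint_left]
    rintro _ ⟨x, rfl⟩ ⟨pos, lt⟩
    exact (hf x pos).not_gt lt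
  obtain ⟨b, hb⟩ := AddSubgroup.cyclic_of_isolated_zero hε isolated
  obtain ⟨c, rfl⟩ : b ∈ f.range := hb ▸ AddSubgroup.mem_closure_singleton_self b
  refine ⟨c, fun x => ?_⟩
  obtain ⟨n, hn⟩ := AddSubgroup.mem_closure_singleton.1 (hb ▸ AddMonoidHom.mem_range.2 ⟨x, rfl⟩)
  exact ⟨n, by rw [map_zsmul, hn]⟩

/-- `(1, κ)` is an eigenvector of `A`. -/
def IsEigenslope (A : SL(2, ℤ)) (κ : ℝ) : Prop :=
  A 1 0 + A 1 1 * κ = κ * (A 0 0 + A 0 1 * κ)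

/-- The eigenvalue of `A` at `(1, κ)`, provided that this is an eigenvector; see `IsEigenslope`. -/
noncomputable def eigenvalueAt (κ : ℝ) (A : SL(2, ℤ)) : ℝ := A 0 0 + A 0 1 * κ

variable {A B : SL(2, ℤ)} {κ : ℝ}

theorem not_isSquare_trace_sq_sub_four (hA : 2 < |A.1.trace|) :
    ¬IsSquare (A.1.trace ^ 2 - 4) := by
  rintro ⟨r, hr⟩
  rw [← sq_abs, ← abs_mul_abs_self r] at hr
  have r_lt : |r| < |A.1.trace| := by nlinarith [abs_nonneg r]
  have lt_r : |A.1.trace| - 1 < |r| := by nlinarith [abs_nonneg r]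
  lia

theorem exists_irrational_isEigenslope (hA : 2 < |A.1.trace|) :
    ∃ κ, Irrational κ ∧ IsEigenslope A κ := by
  have discr_pos : 0 < A.1.trace ^ 2 - 4 := by
    rw [sub_pos, ← sq_abs]
    nlinarith
  have irrational_sqrt : Irrational √((A.1.trace ^ 2 - 4 : ℤ) : ℝ) :=
    irrational_sqrt_intCast_iff.2 ⟨not_isSquare_trace_sq_sub_four hA, discr_pos.le⟩
  have A01_ne := apply_zero_one_ne_zero hA
  refine ⟨((A 1 1 - A 0 0 : ℤ) + √((A.1.trace ^ 2 - 4 : ℤ) : ℝ)) / (2 * A 0 1 : ℤ),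
    (irrational_sqrt.intCast_add _).div_intCast (mul_ne_zero two_ne_zero A01_ne), ?_⟩
  have sq_sqrt := Real.sq_sqrt (Int.cast_nonneg (R := ℝ) discr_pos.le)
  have det_A : (A 0 0 * A 1 1 - A 0 1 * A 1 0 : ℝ) = 1 := mod_cast sl_two_det A
  have A01_ne' : (A 0 1 : ℝ) ≠ 0 := mod_cast A01_ne
  rw [trace_fin_two] at sq_sqrt ⊢
  generalize √(((A 0 0 + A 1 1) ^ 2 - 4 : ℤ) : ℝ) = r at sq_sqrt ⊢
  push_cast at sq_sqrt ⊢
  rw [IsEigenslope]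
  field_simp
  linear_combination -sq_sqrt - 4 * det_A

theorem IsEigenslope.of_commute (hκ : IsEigenslope A κ) (h01 : A 0 1 ≠ 0) (hAB : Commute A B) :
    IsEigenslope B κ := by
  obtain ⟨h10, hdiag⟩ := mul_apply_eq_of_commute hAB
  replace h10 : (B 0 1 * A 1 0 : ℝ) = A 0 1 * B 1 0 := mod_cast h10
  replace hdiag : (B 0 1 * (A 0 0 - A 1 1) : ℝ) = A 0 1 * (B 0 0 - B 1 1) := mod_cast hdiag
  refine mul_left_cancel₀ (Int.cast_ne_zero.2 h01 : (A 0 1 : ℝ) ≠ 0) ?_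
  rw [IsEigenslope] at hκ
  linear_combination B 0 1 * hκ - h10 + κ * hdiag

theorem eigenvalueAt_mul (hB : IsEigenslope B κ) :
    eigenvalueAt κ (A * B) = eigenvalueAt κ A * eigenvalueAt κ B := by
  rw [IsEigenslope] at hB
  simp only [eigenvalueAt, sl_two_mul_apply, Int.cast_add, Int.cast_mul]
  linear_combination A 0 1 * hB

theorem exists_eigenvalueAt_mul_eq_one (hκ : IsEigenslope A κ) :
    ∃ y, eigenvalueAt κ A * y = 1 ∧ eigenvalueAt κ A + y = A.1.trace := by
  refine ⟨A 1 1 - A 0 1 * κ, ?_, by rw [eigenvalueAt, trace_fin_two]; push_cast; ring⟩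
  rw [IsEigenslope] at hκ
  have det_A : (A 0 0 * A 1 1 - A 0 1 * A 1 0 : ℝ) = 1 := mod_cast sl_two_det A
  rw [eigenvalueAt]
  linear_combination A 0 1 * hκ + det_A

theorem two_le_abs_of_one_lt_abs {x y : ℝ} {t : ℤ} (hxy : x * y = 1) (hadd : x + y = t)
    (hx : 1 < |x|) : 2 ≤ |x| := by
  have abs_mul_eq : |x| * |y| = 1 := by rw [← abs_mul, hxy, abs_one]
  have abs_y_lt : |y| < 1 := by nlinarith [abs_nonneg y]
  have four_lt : 4 < (t : ℝ) ^ 2 := by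
    rw [← hadd]
    nlinarith [sq_pos_of_pos (sub_pos.2 (abs_y_lt.trans hx)), sq_abs x, sq_abs y]
  have two_lt : 2 < |t| := by
    rw [← abs_two, ← sq_lt_sq]
    exact_mod_cast show (2 ^ 2 : ℝ) < t ^ 2 by linarith
  have three_le : (3 : ℝ) ≤ |x + y| := by
    rw [hadd]
    exact_mod_cast two_lt
  linarith [abs_add_le x y]

theorem eq_one_or_eq_neg_one_of_abs_eigenvalueAt (hAB : Commute A B) (h01 : A 0 1 ≠ 0)
    (hκ : Irrational κ) (hB : |eigenvalueAt κ B| = 1) : B = 1 ∨ B = -1 := by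
  refine eq_one_or_eq_neg_one_of_commute hAB h01 (by_contra fun B01_ne => ?_)
  have irrational := (hκ.intCast_mul B01_ne).intCast_add (B 0 0)
  rcases (abs_eq zero_le_one).1 hB with h | h
  · exact irrational.ne_one h
  · exact irrational.ne_int (-1) (by simpa [eigenvalueAt] using h)

theorem log_two_le_of_log_abs_eigenvalueAt_pos (hκ : IsEigenslope A κ)
    (hpos : 0 < Real.log |eigenvalueAt κ A|) : Real.log 2 ≤ Real.log |eigenvalueAt κ A| := by
  obtain ⟨y, hmul, hadd⟩ := exists_eigenvalueAt_mul_eq_one hκ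
  have one_lt : 1 < |eigenvalueAt κ A| := (Real.log_pos_iff (abs_nonneg _)).1 hpos
  exact Real.log_le_log two_pos (two_le_abs_of_one_lt_abs hmul hadd one_lt)

theorem exists_logEigenvalue (hA : 2 < |A.1.trace|) :
    ∃ f : Additive (Subgroup.centralizer {A}) →+ ℝ,
      (∀ x, f x = 0 ↔ (x.toMul : SL(2, ℤ)) = 1 ∨ (x.toMul : SL(2, ℤ)) = -1) ∧
      ∀ x, 0 < f x → Real.log 2 ≤ f x := by
  have A01_ne := apply_zero_one_ne_zero hA
  obtain ⟨κ, irrational, slope_A⟩ := exists_irrational_isEigenslope hA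
  have commute (x : Subgroup.centralizer {A}) : Commute A x :=
    (Subgroup.mem_centralizer_singleton_iff.1 x.2).symm
  have slope (x : Subgroup.centralizer {A}) : IsEigenslope (x : SL(2, ℤ)) κ :=
    slope_A.of_commute A01_ne (commute x)
  have eigenvalue_ne (x : Subgroup.centralizer {A}) : eigenvalueAt κ x ≠ 0 :=
    have ⟨_, hmul, _⟩ := exists_eigenvalueAt_mul_eq_one (slope x)
    left_ne_zero_of_mul_eq_one hmul
  refine ⟨AddMonoidHom.mk' (fun x => Real.log |eigenvalueAt κ x.toMul|) fun x y => ?_,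
    fun x => ⟨fun h => ?_, ?_⟩, fun x => log_two_le_of_log_abs_eigenvalueAt_pos (slope x.toMul)⟩
  · rw [toMul_add, Subgroup.coe_mul, eigenvalueAt_mul (slope _), abs_mul,
      Real.log_mul (abs_ne_zero.2 (eigenvalue_ne _)) (abs_ne_zero.2 (eigenvalue_ne _))]
  · have abs_eq : |eigenvalueAt κ x.toMul| = 1 :=
      Real.eq_one_of_pos_of_log_eq_zero (abs_pos.2 (eigenvalue_ne _)) h
    exact eq_one_or_eq_neg_one_of_abs_eigenvalueAt (commute _) A01_ne irrational abs_eq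
  · rintro (h | h) <;> simp [h, eigenvalueAt]

theorem exists_generator_of_centralizer (hA : 2 < |A.1.trace|) :
    ∃ C : SL(2, ℤ), ∀ B, Commute A B → ∃ n : ℤ, B = C ^ n ∨ B = -C ^ n := by
  obtain ⟨f, f_eq_zero, gap⟩ := exists_logEigenvalue hA
  obtain ⟨c, hc⟩ :=
    exists_forall_eq_zsmul_of_isolated_zero f (Real.log_pos one_lt_two) gap
  refine ⟨c.toMul, fun B hB => ?_⟩
  obtain ⟨n, hn⟩ :=
    hc (Additive.ofMul ⟨B, Subgroup.mem_centralizer_singleton_iff.2 hB.symm⟩)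
  rw [← sub_eq_zero, ← map_sub, f_eq_zero] at hn
  refine ⟨n, hn.imp (fun h => ?_) fun h => ?_⟩
  · exact div_eq_one.1 h
  · simpa using div_eq_iff_eq_mul.1 h

theorem eq_zero_of_zpow_eq (hA : 2 < |A.1.trace|) {n : ℤ} (hn : A ^ n = 1 ∨ A ^ n = -1) :
    n = 0 := by
  obtain ⟨f, f_eq_zero, -⟩ := exists_logEigenvalue hA
  let a : Additive (Subgroup.centralizer {A}) :=
    Additive.ofMul ⟨A, Subgroup.mem_centralizer_singleton_iff.2 rfl⟩
  have map_eq_zero : f (n • a) = 0 := (f_eq_zero _).2 hn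
  have map_ne_zero : f a ≠ 0 := by
    rw [ne_eq, f_eq_zero]
    rintro ((h : A = 1) | (h : A = -1)) <;> simp [h, trace_neg] at hA
  rw [map_zsmul, smul_eq_zero] at map_eq_zero
  exact map_eq_zero.resolve_right map_ne_zero

end Centralizer

section PrimitiveCentralizer

variable {A B : SL(2, ℤ)}

theorem coe_psl_eq_iff : (A : PSL2Z) = B ↔ A = B ∨ A = -B := by
  have mem_pmOne (g : SL(2, ℤ)) : g ∈ pmOne ↔ g = 1 ∨ g = -1 := by
    refine ⟨?_, ?_⟩
    · rintro ⟨n, rfl⟩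
      exact n.even_or_odd.imp Even.neg_one_zpow Odd.neg_one_zpow
    · rintro (rfl | rfl)
      exacts [pmOne.one_mem, Subgroup.mem_zpowers _]
  rw [eq_comm, QuotientGroup.eq, mem_pmOne, inv_mul_eq_one, inv_mul_eq_iff_eq_mul, mul_neg_one,
    eq_comm]

theorem IsPrim.natAbs_eq_one {γ : PSL2Z} {n : ℤ} (h : IsPrim (γ ^ n)) : n.natAbs = 1 := by
  by_contra hn
  rcases Nat.lt_or_gt_of_ne hn with hlt | hlt
  · exact h ⟨1, 2, le_rfl, by rw [Int.natAbs_eq_zero.1 (Nat.lt_one_iff.1 hlt), one_pow, zpow_zero]⟩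
  · rcases n.natAbs_eq with hn | hn
    · exact h ⟨γ, n.natAbs, hlt, by rw [← zpow_natCast, ← hn]⟩
    · exact h ⟨γ⁻¹, n.natAbs, hlt, by rw [← zpow_natCast, _root_.inv_zpow', ← hn]⟩

theorem exists_zpow_of_commute (hA : 2 < |A.1.trace|) (hprim : IsPrim (A : PSL2Z))
    (hAB : Commute A B) : ∃ n : ℤ, B = A ^ n ∨ B = -A ^ n := by
  obtain ⟨C, hC⟩ := exists_generator_of_centralizer hA
  have coe_eq_zpow {B : SL(2, ℤ)} (hB : Commute A B) : ∃ n : ℤ, (B : PSL2Z) = C ^ n :=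
    (hC B hB).imp fun _ => coe_psl_eq_iff.2
  obtain ⟨m, hm⟩ := coe_eq_zpow (Commute.refl A)
  obtain ⟨n, hn⟩ := coe_eq_zpow hAB
  have m_mul_self : m * m = 1 := by
    rw [← Int.natAbs_mul_self', (IsPrim.natAbs_eq_one (hm ▸ hprim))]
    rfl
  refine ⟨m * n, coe_psl_eq_iff.1 ?_⟩
  rw [QuotientGroup.mk_zpow, hm, hn, ← _root_.zpow_mul, ← mul_assoc, m_mul_self, one_mul]

/-- For primitive hyperbolic `A` these are representatives of the centralizer `{±Aⁿ}` of `A` modulo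
squares of its elements. -/
def centralizerRep (A : SL(2, ℤ)) (x : Fin 2 × Fin 2) : SL(2, ℤ) :=
  (-1) ^ (x.1 : ℕ) * A ^ (x.2 : ℕ)

theorem commute_centralizerRep (x : Fin 2 × Fin 2) : Commute A (centralizerRep A x) :=
  ((Commute.neg_one_right A).pow_right _).mul_right ((Commute.refl A).pow_right _)

theorem coe_centralizerRep (x : Fin 2 × Fin 2) :
    (centralizerRep A x : PSL2Z) = (A ^ (x.2 : ℕ) : SL(2, ℤ)) :=
  coe_psl_eq_iff.2 <| (neg_one_pow_eq_or SL(2, ℤ) x.1).imp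
    (fun h => by rw [centralizerRep, h, one_mul]) fun h => by rw [centralizerRep, h, neg_one_mul]

theorem exists_centralizerRep_eq_mul_sq (hA : 2 < |A.1.trace|) (hprim : IsPrim (A : PSL2Z))
    (hAB : Commute A B) : ∃ (x : Fin 2 × Fin 2) (z : SL(2, ℤ)),
      Commute A z ∧ centralizerRep A x = B * z ^ 2 := by
  obtain ⟨n, hn⟩ := exists_zpow_of_commute hA hprim hAB
  have zpow_mod_two : A ^ (n % 2).toNat = A ^ n * (A ^ (-(n / 2))) ^ 2 := by
    rw [← zpow_natCast, ← zpow_natCast (A ^ _) 2, ← _root_.zpow_mul, ← _root_.zpow_add]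
    congr 1
    lia
  have mod_two_lt : (n % 2).toNat < 2 := by lia
  rcases hn with rfl | rfl
  · exact ⟨(0, ⟨_, mod_two_lt⟩), A ^ (-(n / 2)), (Commute.refl A).zpow_right _,
      by simpa [centralizerRep] using zpow_mod_two⟩
  · exact ⟨(1, ⟨_, mod_two_lt⟩), A ^ (-(n / 2)), (Commute.refl A).zpow_right _,
      by simpa [centralizerRep] using zpow_mod_two⟩

theorem eq_of_centralizerRep_eq_mul_sq (hA : 2 < |A.1.trace|) (hprim : IsPrim (A : PSL2Z))
    {x y : Fin 2 × Fin 2} {z : SL(2, ℤ)} (hz : Commute A z)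
    (h : centralizerRep A x = centralizerRep A y * z ^ 2) : x = y := by
  obtain ⟨n, hn⟩ := exists_zpow_of_commute hA hprim hz
  have z_sq : z ^ 2 = A ^ (2 * n) := by
    rcases hn with rfl | rfl <;> simp [_root_.zpow_mul', zpow_ofNat]
  have coe_eq : ((A ^ (x.2 - y.2 - 2 * n : ℤ) : SL(2, ℤ)) : PSL2Z) = (1 : SL(2, ℤ)) := by
    have coe_h := congrArg (QuotientGroup.mk (s := pmOne)) h
    rw [QuotientGroup.mk_mul, coe_centralizerRep, coe_centralizerRep, z_sq, ← QuotientGroup.mk_mul,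
      ← zpow_natCast, ← zpow_natCast, ← _root_.zpow_add] at coe_h
    rw [sub_sub, _root_.zpow_sub, QuotientGroup.mk_mul, coe_h, ← QuotientGroup.mk_mul,
      mul_inv_cancel]
  have exponent_eq : (x.2 - y.2 - 2 * n : ℤ) = 0 :=
    eq_zero_of_zpow_eq hA (coe_psl_eq_iff.1 coe_eq)
  have snd_eq : x.2 = y.2 := Fin.ext (by omega)
  have n_eq : n = 0 := by omega
  have neg_one_pow_injective :
      ∀ a b : Fin 2, (-1 : SL(2, ℤ)) ^ (a : ℕ) = (-1) ^ (b : ℕ) → a = b := by decide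
  rw [z_sq, n_eq, mul_zero, zpow_zero, mul_one, centralizerRep, centralizerRep, snd_eq] at h
  exact Prod.ext (neg_one_pow_injective _ _ (mul_right_cancel h)) snd_eq

end PrimitiveCentralizer

section InvertedConjugates

variable {S G ι κ : Type*} [Group S] [Group G]

theorem semiconjBy_inv_conj {g σ τ a : G} (hg : SemiconjBy g σ τ) :
    SemiconjBy τ (g * a * g⁻¹) (g * a * g⁻¹)⁻¹ ↔ SemiconjBy σ a a⁻¹ := by
  obtain rfl : τ = g * σ * g⁻¹ := eq_mul_inv_of_mul_eq hg.eq.symm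
  rw [conj_inv, SemiconjBy.conj_iff]

theorem conj_eq_conj_iff_commute {g h a : G} :
    g * a * g⁻¹ = h * a * h⁻¹ ↔ Commute a (h⁻¹ * g) := by
  rw [mul_inv_eq_iff_eq_mul, Commute, SemiconjBy, mul_assoc h⁻¹, eq_inv_mul_iff_mul_eq, eq_comm]
  simp only [mul_assoc]

theorem semiconjBy_mul_left_iff {w z c d : G} (hw : SemiconjBy w z z⁻¹) (hzd : Commute z d) :
    SemiconjBy z (w * c) (w * d) ↔ c = d * z ^ 2 := by
  have z_mul_w : z * w = w * z⁻¹ := by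
    simpa using (SemiconjBy.inv_right_iff.2 hw).eq.symm
  rw [SemiconjBy, ← mul_assoc, z_mul_w, mul_assoc, mul_assoc, mul_right_inj, inv_mul_eq_iff_eq_mul,
    ← mul_assoc, hzd.eq, mul_assoc, ← sq]

theorem mul_mul_self_eq_one {w c : G} (hw : w * w = 1) (hc : SemiconjBy w c c⁻¹) :
    w * c * (w * c) = 1 := by
  calc w * c * (w * c) = c⁻¹ * w * (w * c) := by rw [hc.eq]
    _ = c⁻¹ * (w * w) * c := by group
    _ = 1 := by rw [hw, mul_one, inv_mul_cancel]

/-- The pairs `(j, B)` of an index `j` such that `w j` inverts `B`, and a conjugate `B` of `A`;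
the `w j` are allowed to lie in a larger group `G`. -/
def invertedConjugates (φ : S →* G) (w : ι → G) (A : S) : Set (ι × S) :=
  {p | SemiconjBy (w p.1) (φ p.2) (φ p.2)⁻¹ ∧ ∃ g, g * A * g⁻¹ = p.2}

/-- Conjugating `B = g A g⁻¹` back to `A` turns `w j` into `g⁻¹ (w j) g`, so these pairs correspond
to the elements inverting `A`, up to conjugacy under the centralizer of `A`. -/
theorem ncard_invertedConjugates {φ : S →* G} {w : ι → G} {A : S} {τ : κ → G}
    (w_unique : ∀ g j k, SemiconjBy (φ g) (w j) (w k) → j = k ∧ g ∈ Subgroup.center S)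
    (τ_inv : ∀ x, SemiconjBy (τ x) (φ A) (φ A)⁻¹)
    (τ_conj : ∀ x, ∃ g j, SemiconjBy (φ g) (τ x) (w j))
    (τ_surj : ∀ σ, SemiconjBy σ (φ A) (φ A)⁻¹ → (∃ g j, SemiconjBy (φ g) σ (w j)) →
      ∃ x z, Commute A z ∧ SemiconjBy (φ z) (τ x) σ)
    (τ_inj : ∀ x y z, Commute A z → SemiconjBy (φ z) (τ x) (τ y) → x = y) :
    (invertedConjugates φ w A).ncard = Nat.card κ := by
  choose g j hgj using τ_conj
  have conj_unique {x h k} (hk : SemiconjBy (φ h) (τ x) (w k)) :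
      j x = k ∧ g x * A * (g x)⁻¹ = h * A * h⁻¹ := by
    have hconj : SemiconjBy (φ (h * (g x)⁻¹)) (w (j x)) (w k) := by
      rw [map_mul, map_inv]
      exact hk.mul_left ((hgj x).inv_symm_left)
    obtain ⟨j_eq, central⟩ := w_unique _ _ _ hconj
    have comm := Subgroup.mem_center_iff.1 central (g x * A * (g x)⁻¹)
    refine ⟨j_eq, eq_mul_inv_of_mul_eq (mul_right_cancel (b := (g x)⁻¹) ?_)⟩
    simpa [mul_assoc] using comm
  have range_eq : Set.range (fun x => (j x, g x * A * (g x)⁻¹)) = invertedConjugates φ w A := by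
    ext ⟨k, B⟩
    constructor
    · rintro ⟨x, rfl, rfl⟩
      refine ⟨?_, g x, rfl⟩
      simpa only [map_mul, map_inv] using (semiconjBy_inv_conj (hgj x)).2 (τ_inv x)
    · rintro ⟨hk : SemiconjBy (w k) (φ B) (φ B)⁻¹, h, rfl⟩
      have hσ : SemiconjBy (φ h) ((φ h)⁻¹ * w k * φ h) (w k) := by
        simp [SemiconjBy, mul_assoc]
      rw [map_mul, map_mul, map_inv, semiconjBy_inv_conj hσ] at hk
      obtain ⟨x, z, hz, hxz⟩ := τ_surj _ hk ⟨h, k, hσ⟩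
      obtain ⟨j_eq, conj_eq⟩ := conj_unique (map_mul φ h z ▸ hσ.mul_left hxz)
      have conj_mul_eq : h * z * A * (h * z)⁻¹ = h * A * h⁻¹ := by
        rwa [conj_eq_conj_iff_commute, inv_mul_cancel_left]
      exact ⟨x, Prod.ext j_eq (conj_eq.trans conj_mul_eq)⟩
  have injective : Function.Injective fun x => (j x, g x * A * (g x)⁻¹) := by
    intro x y hxy
    obtain ⟨j_eq : j x = j y, conj_eq : g x * A * (g x)⁻¹ = g y * A * (g y)⁻¹⟩ :=
      Prod.ext_iff.1 hxy
    refine τ_inj x y ((g y)⁻¹ * g x) (conj_eq_conj_iff_commute.1 conj_eq) ?_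
    rw [map_mul, map_inv]
    exact (hgj y).inv_symm_left.mul_left (j_eq ▸ hgj x)
  rw [← range_eq, Set.ncard_range_of_injective injective]

end InvertedConjugates

section ReflectionsOfPrimitive

variable {A : SL(2, ℤ)} {i : Fin 2}

theorem det_shearReflection_mul_toGL (k : ℤ) (B : SL(2, ℤ)) :
    (shearReflection k * toGL B).1.det = -1 := by
  rw [Units.val_mul, det_mul, det_shearReflection]
  exact congrArg (-1 * ·) B.2

theorem exists_eq_shearReflection_mul (hi : InvertedBy i A) {σ : GL (Fin 2) ℤ}
    (hσ : SemiconjBy σ (toGL A) (toGL A)⁻¹) (hdet : σ.1.det = -1) :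
    ∃ B, Commute A B ∧ σ = shearReflection i * toGL B := by
  have det_eq : (shearReflection i * σ).1.det = 1 := by
    rw [Units.val_mul, det_mul, det_shearReflection, hdet, neg_one_mul, neg_neg]
  have commute : Commute (shearReflection i * σ) (toGL A) := by
    have h := (SemiconjBy.inv_right_iff.2 hi).mul_left hσ
    rwa [inv_inv] at h
  obtain ⟨B, hB⟩ : ∃ B : SL(2, ℤ), toGL B = shearReflection i * σ :=
    ⟨⟨_, det_eq⟩, Units.ext rfl⟩
  refine ⟨B, Matrix.SpecialLinearGroup.toGL_injective ?_, ?_⟩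
  · rw [map_mul, map_mul, hB, commute.eq]
  · rw [hB, ← mul_assoc, shearReflection_mul_self, one_mul]

theorem det_eq_neg_one_of_semiconjBy {σ : GL (Fin 2) ℤ} {g : SL(2, ℤ)} {k : ℤ}
    (h : SemiconjBy (toGL g) σ (shearReflection k)) : σ.1.det = -1 := by
  rw [← det_shearReflection_mul_toGL k g, ← h.eq, Units.val_mul, det_mul]
  exact ((congrArg (· * σ.1.det) g.2).trans (one_mul _)).symm

theorem commute_of_commute (hA : 2 < |A.1.trace|) (hprim : IsPrim (A : PSL2Z)) {B C : SL(2, ℤ)}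
    (hB : Commute A B) (hC : Commute A C) : Commute B C := by
  obtain ⟨n, rfl | rfl⟩ := exists_zpow_of_commute hA hprim hB
  exacts [hC.zpow_left n, (hC.zpow_left n).neg_left]

theorem ncard_invertedConjugates_eq_four (hA : 2 < |A.1.trace|) (hprim : IsPrim (A : PSL2Z))
    (hi : InvertedBy i A) :
    (invertedConjugates toGL (fun j : Fin 2 => shearReflection j) A).ncard = 4 := by
  have A01_ne := apply_zero_one_ne_zero hA
  have sq_eq_one (x) : shearReflection i * toGL (centralizerRep A x) *
      (shearReflection i * toGL (centralizerRep A x)) = 1 :=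
    mul_mul_self_eq_one (shearReflection_mul_self i)
      (hi.of_commute (commute_centralizerRep x) A01_ne)
  have conj_iff {z c d : SL(2, ℤ)} (hz : Commute A z) (hd : Commute A d) :
      SemiconjBy (toGL z) (shearReflection i * toGL c) (shearReflection i * toGL d) ↔
        c = d * z ^ 2 := by
    rw [semiconjBy_mul_left_iff (hi.of_commute hz A01_ne)
      ((commute_of_commute hA hprim hz hd).map toGL), ← map_pow, ← map_mul]
    exact Matrix.SpecialLinearGroup.toGL_injective.eq_iff
  rw [ncard_invertedConjugates (τ := fun x => shearReflection i * toGL (centralizerRep A x))]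
  · simp
  · intro g j k h
    refine (eq_of_semiconjBy_shearReflection h).imp_right ?_
    rintro (rfl | rfl)
    exacts [one_mem _, Subgroup.mem_center_iff.2 fun g => (Commute.neg_one_right g).eq]
  · exact fun x => hi.mul_left ((commute_centralizerRep x).map toGL).symm
  · intro x
    exact exists_semiconjBy_shearReflection (sq_eq_one x) (det_shearReflection_mul_toGL i _)
  · rintro σ hσ ⟨g, j, hconj⟩
    obtain ⟨B, hB, rfl⟩ := exists_eq_shearReflection_mul hi hσ (det_eq_neg_one_of_semiconjBy hconj)
    obtain ⟨x, z, hz, hx⟩ := exists_centralizerRep_eq_mul_sq hA hprim hB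
    exact ⟨x, z, hz, (conj_iff hz hB).2 hx⟩
  · intro x y z hz h
    exact eq_of_centralizerRep_eq_mul_sq hA hprim hz
      ((conj_iff hz (commute_centralizerRep y)).1 h)

end ReflectionsOfPrimitive

/-! ### Counting ambiguous lifts and classes -/

section FactorizationCount

theorem encard_eq_two_mul_of_involutive {α : Type*} {s : Set α} {p : α → Prop} {f : α → α}
    (hf : f.Involutive) (hfs : Set.MapsTo f s s) (hp : ∀ x ∈ s, p (f x) ↔ ¬p x) :
    s.encard = 2 * {x ∈ s | p x}.encard := by
  have image_eq : f '' {x ∈ s | p x} = {x ∈ s | ¬p x} := by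
    rw [hf.image_eq_preimage_symm]
    ext x
    constructor
    · intro ⟨hx, hpx⟩
      have hx' : x ∈ s := hf x ▸ hfs hx
      exact ⟨hx', (hp x hx').1 hpx⟩
    · intro ⟨hx, hpx⟩
      exact ⟨hfs hx, (hp x hx).2 hpx⟩
  have union_eq : {x ∈ s | p x} ∪ {x ∈ s | ¬p x} = s := by
    ext x
    simp [← and_or_left, em]
  have disjoint : Disjoint {x ∈ s | p x} {x ∈ s | ¬p x} :=
    Set.disjoint_left.2 fun _ h h' => h'.2 h.2
  nth_rw 1 [← union_eq]
  rw [Set.encard_union_eq disjoint, ← image_eq, hf.injective.encard_image, two_mul]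

/-- The triples `(x, y, t)` with `x y = t² - k` and `x ≡ y` modulo `k`, where `t ≤ X`; the lower
bound on `t` ensures that `x y > 0` and `x ≠ y`. -/
def congruentFactorizations (k X : ℤ) : Set (ℤ × ℤ × ℤ) :=
  {v | v.1 * v.2.1 = v.2.2 ^ 2 - k ∧ k ∣ v.2.1 - v.1 ∧ k + 1 < 2 * v.2.2 ∧ v.2.2 ≤ X}

variable {k X : ℤ}

theorem mul_pos_and_ne_of_mem_congruentFactorizations (hk : 0 < k) {v : ℤ × ℤ × ℤ}
    (hv : v ∈ congruentFactorizations k X) : 0 < v.1 * v.2.1 ∧ v.1 ≠ v.2.1 := by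
  obtain ⟨x, y, t⟩ := v
  obtain ⟨hxy : x * y = t ^ 2 - k, -, ht : k + 1 < 2 * t, -⟩ := hv
  refine ⟨by simp only; nlinarith, ?_⟩
  rintro (rfl : x = y)
  have abs_lt : |x| < |t| := sq_lt_sq.1 (by linarith)
  have abs_t : |t| = t := abs_of_pos (by linarith)
  nlinarith [sq_abs x, abs_nonneg x]

theorem encard_congruentFactorizations (hk : 0 < k) :
    (congruentFactorizations k X).encard =
      4 * {v ∈ congruentFactorizations k X | 0 < v.1 ∧ v.1 < v.2.1}.encard := by
  rw [encard_eq_two_mul_of_involutive (s := congruentFactorizations k X) (p := fun v => 0 < v.1)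
      (f := fun v => (-v.1, -v.2.1, v.2.2)),
    encard_eq_two_mul_of_involutive (s := {v ∈ congruentFactorizations k X | 0 < v.1})
      (p := fun v => v.1 < v.2.1) (f := fun v => (v.2.1, v.1, v.2.2)), ← mul_assoc]
  · norm_num [and_assoc]
  · exact fun v => rfl
  · intro v ⟨hv, hpos⟩
    have prod_pos := (mul_pos_and_ne_of_mem_congruentFactorizations hk hv).1
    obtain ⟨hxy, hdvd, ht⟩ := hv
    exact ⟨⟨(mul_comm _ _).trans hxy, dvd_sub_comm.1 hdvd, ht⟩,
      pos_of_mul_pos_right prod_pos hpos.le⟩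
  · intro v ⟨hv, _⟩
    have := (mul_pos_and_ne_of_mem_congruentFactorizations hk hv).2
    simp only
    lia
  · exact fun v => by simp
  · intro v ⟨hxy, hdvd, ht⟩
    refine ⟨by simpa using hxy, ?_, ht⟩
    simpa only [neg_sub_neg] using dvd_sub_comm.1 hdvd
  · intro v hv
    have := left_ne_zero_of_mul (mul_pos_and_ne_of_mem_congruentFactorizations hk hv).1.ne'
    simp only
    lia

theorem lt_iff_lt_of_mul_eq_sq_sub {b c t : ℤ} (hk : 0 < k) (hb : 0 < b) (ht : k + 1 < 2 * t)
    (hbc : b * c = t ^ 2 - k) : b < c ↔ b < t := by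
  constructor
  · intro h
    by_contra! hle
    nlinarith
  · intro h
    by_contra! hle
    nlinarith

theorem mul_dvd_sub_sq_iff {b d : ℤ} : k * b ∣ d - b ^ 2 ↔ ∃ c, b * c = d ∧ k ∣ c - b := by
  constructor
  · rintro ⟨q, hq⟩
    exact ⟨b + k * q, by linear_combination -hq, q, by ring⟩
  · rintro ⟨c, rfl, hdvd⟩
    rw [sq, ← mul_sub, mul_comm k]
    exact mul_dvd_mul_left b hdvd

theorem encard_pos_lt_congruentFactorizations {P : ℕ → ℕ → Prop} [∀ b, DecidablePred (P b)] {X : ℕ}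
    (hk : 0 < k)
    (hP : ∀ b t : ℕ, 0 < b → b < t →
      (P b t ↔ k * b ∣ (t : ℤ) ^ 2 - k - b ^ 2 ∧ k + 1 < 2 * t)) :
    {v ∈ congruentFactorizations k X | 0 < v.1 ∧ v.1 < v.2.1}.encard = (pairsBelow P X).card := by
  have injOn : Set.InjOn (fun v : ℤ × ℤ × ℤ => (v.1.toNat, v.2.2.toNat))
      {v ∈ congruentFactorizations k X | 0 < v.1 ∧ v.1 < v.2.1} := by
    rintro ⟨x, y, t⟩ ⟨⟨hxy, -, ht, -⟩, hx, -⟩ ⟨x', y', t'⟩ ⟨⟨hxy', -, ht', -⟩, hx', -⟩ h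
    simp only [Prod.mk.injEq] at h hxy hxy' hx hx' ht ht' ⊢
    obtain rfl : x = x' := by lia
    obtain rfl : t = t' := by lia
    exact ⟨rfl, mul_left_cancel₀ hx.ne' (hxy.trans hxy'.symm), rfl⟩
  rw [← injOn.encard_image, ← Set.encard_coe_eq_coe_finsetCard]
  congr 1
  ext ⟨b, t⟩
  simp only [pairsBelow, Finset.coe_filter, Finset.mem_product, Finset.mem_Icc]
  constructor
  · rintro ⟨⟨x, y, t⟩, ⟨⟨hxy, hdvd, ht, htX⟩, hx, hlt⟩, h⟩
    simp only [Prod.mk.injEq] at h hxy hdvd hx ht htX hlt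
    obtain ⟨rfl, rfl⟩ := h
    have hxt := (lt_iff_lt_of_mul_eq_sq_sub hk hx ht hxy).1 hlt
    lift x to ℕ using hx.le
    lift t to ℕ using by lia
    simp only [Int.toNat_natCast]
    refine ⟨by lia, by lia, (hP x t (by lia) (by lia)).2 ⟨?_, ht⟩⟩
    exact mul_dvd_sub_sq_iff.2 ⟨y, hxy, hdvd⟩
  · rintro ⟨⟨⟨hb, -⟩, -, htX⟩, hbt, h⟩
    obtain ⟨hdvd, ht⟩ := (hP b t hb hbt).1 h
    have b_pos : (0 : ℤ) < b := by exact_mod_cast hb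
    obtain ⟨c, hc, hcb⟩ := mul_dvd_sub_sq_iff.1 hdvd
    exact ⟨(b, c, t), ⟨⟨hc, hcb, ht, Int.ofNat_le.2 htX⟩, b_pos,
      (lt_iff_lt_of_mul_eq_sq_sub hk b_pos ht hc).2 (by exact_mod_cast hbt)⟩, by simp⟩

theorem encard_congruentFactorizations_one (X : ℕ) :
    (congruentFactorizations 1 X).encard = 4 * (firstKindPairs X).card := by
  rw [encard_congruentFactorizations one_pos]
  refine congrArg _ (encard_pos_lt_congruentFactorizations one_pos fun b t hb hbt => ?_)
  have ht : (1 + 1 : ℤ) < 2 * t := by lia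
  rw [one_mul, and_iff_left ht, sq (b : ℤ)]
  exact (dvd_sub_left (dvd_mul_right _ _)).symm

theorem encard_congruentFactorizations_four (T : ℕ) :
    (congruentFactorizations 4 T).encard = 4 * (secondKindPairs T).card := by
  rw [encard_congruentFactorizations four_pos]
  refine congrArg _ (encard_pos_lt_congruentFactorizations four_pos fun b t hb hbt => ?_)
  rw [sub_right_comm, iff_self_and]
  intro hdvd
  by_contra! ht
  obtain rfl : t = 2 := by lia
  obtain rfl : b = 1 := by lia
  norm_num at hdvd

end FactorizationCount

section AmbiguousLifts

/-- The matrices of trace between `3` and `T` that are inverted by `[[1, 0], [k, -1]]`. -/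
def invertedMatrices (k : ℤ) (T : ℕ) : Set SL(2, ℤ) :=
  {A | InvertedBy k A ∧ 3 ≤ A.1.trace ∧ A.1.trace ≤ T}

theorem encard_invertedMatrices_zero (T : ℕ) :
    (invertedMatrices 0 T).encard = 4 * (firstKindPairs (T / 2)).card := by
  have injOn : Set.InjOn (fun A : SL(2, ℤ) => (A 0 1, A 1 0, A 0 0)) (invertedMatrices 0 T) := by
    intro A hA B hB h
    have A11 := invertedBy_iff.1 hA.1
    have B11 := invertedBy_iff.1 hB.1
    simp only [Prod.mk.injEq] at h
    exact sl_two_ext_iff.2 ⟨h.2.2, h.1, h.2.1, by lia⟩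
  rw [← encard_congruentFactorizations_one, ← injOn.encard_image]
  congr 1
  ext ⟨x, y, t⟩
  constructor
  · rintro ⟨A, ⟨hA, hlow, hup⟩, h⟩
    obtain ⟨rfl, rfl, rfl⟩ : A 0 1 = x ∧ A 1 0 = y ∧ A 0 0 = t := by simpa using h
    have A11 := invertedBy_iff.1 hA
    have det_A := sl_two_det A
    rw [trace_fin_two] at hlow hup
    refine ⟨?_, one_dvd _, ?_, ?_⟩ <;> simp only <;> grind
  · rintro ⟨hxy, -, hlow, hup⟩
    simp only at hxy hlow hup
    have det_eq : (!![t, x; y, t]).det = 1 := by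
      rw [det_fin_two_of]
      linear_combination -hxy
    refine ⟨⟨!![t, x; y, t], det_eq⟩, ⟨?_, ?_, ?_⟩, rfl⟩
    · exact invertedBy_iff.2 (by simp)
    all_goals rw [trace_fin_two_of]; lia

theorem encard_invertedMatrices_one (T : ℕ) :
    (invertedMatrices 1 T).encard = 4 * (secondKindPairs T).card := by
  have injOn : Set.InjOn (fun A : SL(2, ℤ) => (A 0 1, A 0 1 + 4 * A 1 0, A.1.trace))
      (invertedMatrices 1 T) := by
    intro A hA B hB h
    have A11 := invertedBy_iff.1 hA.1
    have B11 := invertedBy_iff.1 hB.1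
    simp only [Prod.mk.injEq, trace_fin_two] at h
    exact sl_two_ext_iff.2 (by lia)
  rw [← encard_congruentFactorizations_four, ← injOn.encard_image]
  congr 1
  ext ⟨x, y, t⟩
  constructor
  · rintro ⟨A, ⟨hA, hlow, hup⟩, h⟩
    obtain ⟨rfl, rfl, rfl⟩ : A 0 1 = x ∧ A 0 1 + 4 * A 1 0 = y ∧ A.1.trace = t := by simpa using h
    have A11 := invertedBy_iff.1 hA
    refine ⟨?_, ⟨A 1 0, by ring⟩, by simp only; lia, hup⟩
    simp only [trace_fin_two]
    grind [sl_two_det A]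
  · rintro ⟨hxy, ⟨c, hc⟩, hlow, hup⟩
    simp only at hxy hc hlow hup
    obtain rfl : y = x + 4 * c := by lia
    obtain ⟨a, rfl⟩ : ∃ a, t = x + 2 * a := by
      have even_sq_sub : Even (t ^ 2 - x ^ 2) := ⟨2 * x * c + 2, by linarith⟩
      have even_sub : Even (t - x) := by
        simpa [Int.even_sub, Int.even_pow] using even_sq_sub
      exact even_sub.two_dvd.imp fun _ => eq_add_of_sub_eq'
    have det_eq : (!![a, x; c, a + x]).det = 1 := by
      rw [det_fin_two_of]
      linarith
    refine ⟨⟨!![a, x; c, a + x], det_eq⟩, ⟨?_, ?_, ?_⟩, ?_⟩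
    · exact invertedBy_iff.2 (by simp)
    · rw [trace_fin_two_of]; lia
    · rw [trace_fin_two_of]; lia
    · simp [trace_fin_two_of]; lia

/-- The pairs `(i, A)` of a matrix `A` of trace between `3` and `T` and an index `i` such that
`[[1, 0], [i, -1]]` inverts `A`. -/
def ambiguousLifts (T : ℕ) : Set (Fin 2 × SL(2, ℤ)) :=
  {p | p.2 ∈ invertedMatrices p.1 T}

theorem encard_ambiguousLifts (T : ℕ) : (ambiguousLifts T).encard =
    (4 * ((firstKindPairs (T / 2)).card + (secondKindPairs T).card) : ℕ) := by
  have union_eq : ambiguousLifts T =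
      Prod.mk 0 '' invertedMatrices 0 T ∪ Prod.mk 1 '' invertedMatrices 1 T := by
    ext ⟨i, A⟩
    fin_cases i <;> simp [ambiguousLifts]
  have disjoint : Disjoint (Prod.mk (0 : Fin 2) '' invertedMatrices 0 T)
      (Prod.mk 1 '' invertedMatrices 1 T) := by
    rw [Set.disjoint_left]
    rintro ⟨i, A⟩ ⟨_, _, h⟩ ⟨_, _, h'⟩
    exact zero_ne_one ((Prod.ext_iff.1 h).1.trans (Prod.ext_iff.1 h').1.symm)
  rw [union_eq, Set.encard_union_eq disjoint, (Prod.mk_right_injective _).encard_image,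
    (Prod.mk_right_injective _).encard_image, encard_invertedMatrices_zero,
    encard_invertedMatrices_one]
  push_cast
  ring

theorem finite_ambiguousLifts (T : ℕ) : (ambiguousLifts T).Finite :=
  Set.finite_of_encard_eq_coe (encard_ambiguousLifts T)

theorem ncard_ambiguousLifts (T : ℕ) : (ambiguousLifts T).ncard =
    4 * ((firstKindPairs (T / 2)).card + (secondKindPairs T).card) := by
  rw [Set.ncard_def, encard_ambiguousLifts, ENat.toNat_natCast]

theorem card_pairsBelow_le {P : ℕ → ℕ → Prop} [∀ b, DecidablePred (P b)] (X : ℕ) :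
    (pairsBelow P X).card ≤ X ^ 2 :=
  (Finset.card_filter_le _ _).trans (by simp [sq])

theorem ncard_ambiguousLifts_le (T : ℕ) : (ambiguousLifts T).ncard ≤ 8 * T ^ 2 := by
  have card_first : (firstKindPairs (T / 2)).card ≤ (T / 2) ^ 2 := card_pairsBelow_le _
  have card_second : (secondKindPairs T).card ≤ T ^ 2 := card_pairsBelow_le _
  have half_le : (T / 2) ^ 2 ≤ T ^ 2 := Nat.pow_le_pow_left (Nat.div_le_self T 2) 2
  rw [ncard_ambiguousLifts]
  lia

end AmbiguousLifts

section NonprimitiveLifts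

variable {A B : SL(2, ℤ)}

theorem trace_mul_mul_self (B C : SL(2, ℤ)) :
    (B * (B * C)).1.trace = B.1.trace * (B * C).1.trace - C.1.trace := by
  simp only [trace_fin_two, sl_two_mul_apply]
  linear_combination -(C 0 0 + C 1 1) * sl_two_det B

theorem trace_pow_add_two (B : SL(2, ℤ)) (n : ℕ) :
    (B ^ (n + 2)).1.trace = B.1.trace * (B ^ (n + 1)).1.trace - (B ^ n).1.trace := by
  rw [pow_succ' B (n + 1), pow_succ' B n, trace_mul_mul_self]

theorem monotone_trace_pow (hB : 3 ≤ B.1.trace) : Monotone fun n : ℕ => (B ^ n).1.trace := by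
  have pos_and_le (n : ℕ) : 0 < (B ^ n).1.trace ∧ (B ^ n).1.trace ≤ (B ^ (n + 1)).1.trace := by
    induction n with
    | zero =>
      simp [trace_fin_two] at hB ⊢
      lia
    | succ n ih =>
      rw [trace_pow_add_two]
      exact ⟨ih.1.trans_le ih.2, by nlinarith⟩
  exact monotone_nat_of_le_succ fun n => (pos_and_le n).2

theorem two_pow_le_trace_pow (hB : 3 ≤ B.1.trace) (n : ℕ) : 2 ^ n ≤ (B ^ n).1.trace := by
  induction n with
  | zero => simp
  | succ n ih =>
    rcases n with _ | n
    · simpa using by lia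
    · have le_succ : (B ^ n).1.trace ≤ (B ^ (n + 1)).1.trace := monotone_trace_pow hB n.le_succ
      rw [trace_pow_add_two, pow_succ]
      nlinarith [pow_pos (two_pos (α := ℤ)) (n + 1)]

theorem trace_sq_sub_two_le_trace_pow (hB : 3 ≤ B.1.trace) {n : ℕ} (hn : 2 ≤ n) :
    B.1.trace ^ 2 - 2 ≤ (B ^ n).1.trace := by
  have trace_sq : (B ^ 2).1.trace = B.1.trace ^ 2 - 2 := by
    rw [trace_pow_add_two, zero_add, pow_one, pow_zero, sq]
    simp [trace_fin_two]
  exact trace_sq ▸ monotone_trace_pow hB hn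

theorem exists_eq_pow_of_not_isPrim (hA : 3 ≤ A.1.trace) (h : ¬IsPrim (A : PSL2Z)) :
    ∃ (B : SL(2, ℤ)) (n : ℕ), 2 ≤ n ∧ 3 ≤ B.1.trace ∧ A = B ^ n := by
  obtain ⟨δ, n, hn, hδ⟩ := not_not.1 h
  obtain ⟨B, rfl⟩ := QuotientGroup.mk_surjective δ
  have eq_pow : A = B ^ n ∨ A = -B ^ n := coe_psl_eq_iff.1 hδ.symm
  have commute : Commute A B := by
    rcases eq_pow with rfl | rfl
    exacts [Commute.pow_self B n, (Commute.pow_self B n).neg_left]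
  have hyp_A : 2 < |A.1.trace| := by
    rw [lt_abs]
    lia
  have hyp_B : 2 < |B.1.trace| := by
    refine two_lt_abs_trace_of_commute commute hyp_A ?_ ?_ <;> rintro rfl
    · rcases eq_pow with rfl | rfl <;> simp at hA
    · rcases neg_one_pow_eq_or SL(2, ℤ) n with hpow | hpow <;> rw [hpow] at eq_pow <;>
        rcases eq_pow with rfl | rfl <;> simp at hA
  have eq_pow_of_le {C : SL(2, ℤ)} (hC : 3 ≤ C.1.trace) (h : A = C ^ n ∨ A = -C ^ n) :
      A = C ^ n := by
    refine h.resolve_right ?_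
    rintro rfl
    rw [trace_neg_sl] at hA
    linarith [two_pow_le_trace_pow hC n, pow_pos (two_pos (α := ℤ)) n]
  rcases lt_abs.1 hyp_B with hB | hB
  · exact ⟨B, n, hn, hB, eq_pow_of_le hB eq_pow⟩
  · rw [← trace_neg_sl] at hB
    refine ⟨-B, n, hn, hB, eq_pow_of_le hB ?_⟩
    rcases n.even_or_odd with even | odd
    · rwa [even.neg_pow]
    · rwa [odd.neg_pow, neg_neg, or_comm]

/-- The pairs in `ambiguousLifts T` whose matrix is primitive in `PSL₂(ℤ)`. -/
def primitiveAmbiguousLifts (T : ℕ) : Set (Fin 2 × SL(2, ℤ)) :=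
  {p ∈ ambiguousLifts T | IsPrim (p.2 : PSL2Z)}

theorem ambiguousLifts_diff_subset (T : ℕ) : ambiguousLifts T \ primitiveAmbiguousLifts T ⊆
    (fun q : (Fin 2 × SL(2, ℤ)) × ℕ => (q.1.1, q.1.2 ^ q.2)) ''
      (ambiguousLifts (T + 2).sqrt ×ˢ Set.Icc 1 (Nat.log 2 T)) := by
  rintro ⟨i, A⟩ ⟨hA, hnot⟩
  obtain ⟨B, n, hn, hB, rfl⟩ := exists_eq_pow_of_not_isPrim hA.2.1 fun h => hnot ⟨hA, h⟩
  obtain ⟨hinv, hlow, hup⟩ : InvertedBy i (B ^ n) ∧ 3 ≤ (B ^ n).1.trace ∧ (B ^ n).1.trace ≤ T := hA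
  have hyp : 2 < |(B ^ n).1.trace| := lt_abs.2 (.inl hlow)
  have inv_B : InvertedBy i B := hinv.of_commute (Commute.pow_self B n) (apply_zero_one_ne_zero hyp)
  have trace_le : B.1.trace ≤ (T + 2).sqrt := by
    have sq_le : B.1.trace.toNat ^ 2 ≤ T + 2 := by
      zify
      rw [Int.toNat_of_nonneg (by lia)]
      linarith [trace_sq_sub_two_le_trace_pow hB hn]
    have := Nat.le_sqrt'.2 sq_le
    lia
  have n_le : n ≤ Nat.log 2 T := by
    refine Nat.le_log_of_pow_le one_lt_two ?_
    exact_mod_cast (two_pow_le_trace_pow hB n).trans hup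
  exact ⟨((i, B), n), ⟨⟨inv_B, hB, trace_le⟩, by lia, n_le⟩, rfl⟩

theorem ncard_ambiguousLifts_diff_le (T : ℕ) :
    (ambiguousLifts T \ primitiveAmbiguousLifts T).ncard ≤ 8 * (T + 2) * Nat.log 2 T := by
  have finite := (finite_ambiguousLifts (T + 2).sqrt).prod (Set.finite_Icc 1 (Nat.log 2 T))
  calc _ ≤ _ := Set.ncard_le_ncard (ambiguousLifts_diff_subset T) (finite.image _)
    _ ≤ _ := Set.ncard_image_le finite
    _ = (ambiguousLifts (T + 2).sqrt).ncard * Nat.log 2 T := by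
      rw [Set.ncard_prod, ← Finset.coe_Icc, Set.ncard_coe_finset, Nat.card_Icc, Nat.add_sub_cancel]
    _ ≤ 8 * (T + 2) * Nat.log 2 T := by
      gcongr
      exact (ncard_ambiguousLifts_le _).trans (by gcongr; exact Nat.sqrt_le' _)

end NonprimitiveLifts

section AmbiguousElements

variable {A B : SL(2, ℤ)} {γ δ : PSL2Z}

theorem invertedBy_iff_conj_eq_or {k : ℤ} :
    InvertedBy k A ↔
      (shearReflection k : Matrix (Fin 2) (Fin 2) ℤ) * A * (shearReflection k).1⁻¹ =
          ((A⁻¹ : SL(2, ℤ)) : Matrix (Fin 2) (Fin 2) ℤ) ∨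
        (shearReflection k : Matrix (Fin 2) (Fin 2) ℤ) * A * (shearReflection k).1⁻¹ =
          -((A⁻¹ : SL(2, ℤ)) : Matrix (Fin 2) (Fin 2) ℤ) := by
  rw [← coe_units_inv, Units.mul_inv_eq_iff_eq_mul, Units.mul_inv_eq_iff_eq_mul, neg_mul,
    ← invertedBy_iff_coe, iff_self_or, shearReflection_mul_coe, coe_inv_mul_shearReflection]
  intro h
  simp only [← ext_iff, Fin.forall_fin_two, of_apply, cons_val', cons_val_zero, cons_val_one,
    cons_val_fin_one, neg_apply] at h
  have det_A := sl_two_det A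
  have A01 : A 0 1 = 0 := by lia
  have A11 : A 1 1 = -A 0 0 := by grind
  rw [A01, A11] at det_A
  nlinarith [sq_nonneg (A 0 0)]

theorem ambFst_or_ambSnd_iff :
    AmbFst γ ∨ AmbSnd γ ↔ ∃ i : Fin 2, ∃ A : SL(2, ℤ), (A : PSL2Z) = γ ∧ InvertedBy i A := by
  rw [Fin.exists_fin_two]
  simp only [invertedBy_iff_conj_eq_or]
  rfl

theorem isConj_coe_psl_iff :
    IsConj (A : PSL2Z) B ↔ ∃ g : SL(2, ℤ), g * A * g⁻¹ = B ∨ g * A * g⁻¹ = -B := by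
  rw [isConj_iff, QuotientGroup.mk_surjective.exists]
  refine exists_congr fun g => ?_
  rw [← coe_psl_eq_iff]
  rfl

theorem abs_trace_eq_of_isConj (h : IsConj (A : PSL2Z) B) : |A.1.trace| = |B.1.trace| := by
  obtain ⟨g, hg | hg⟩ := isConj_coe_psl_iff.1 h
  · rw [← hg, trace_conj_sl]
  · rw [← trace_conj_sl g A, hg, trace_neg_sl, abs_neg]

theorem IsPrim.of_isConj (h : IsPrim γ) (hconj : IsConj γ δ) : IsPrim δ := by
  rintro ⟨η, n, hn, rfl⟩
  obtain ⟨c, rfl⟩ := isConj_iff.1 hconj.symm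
  exact h ⟨c * η * c⁻¹, n, hn, conj_pow⟩

theorem exists_lift_abs_trace_iff (p : ℤ → Prop) :
    (∃ B : SL(2, ℤ), (B : PSL2Z) = A ∧ p |B.1.trace|) ↔ p |A.1.trace| := by
  refine ⟨?_, fun h => ⟨A, rfl, h⟩⟩
  rintro ⟨B, hB, h⟩
  have isConj : IsConj (B : PSL2Z) A := by rw [hB]
  rwa [← abs_trace_eq_of_isConj isConj]

theorem isHyp_coe_iff : IsHyp (A : PSL2Z) ↔ 2 < |A.1.trace| :=
  exists_lift_abs_trace_iff (2 < ·)

/-- The largest integer trace compatible with translation length at most `s`. -/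
noncomputable def traceBound (s : ℝ) : ℕ := ⌊2 * Real.cosh (s / 2)⌋₊

theorem two_mul_arcosh_half_le_iff {s x : ℝ} (hs : 0 ≤ s) (hx : 2 ≤ x) :
    2 * arcosh (x / 2) ≤ s ↔ x ≤ 2 * Real.cosh (s / 2) := by
  have one_le : 1 ≤ x / 2 := by linarith
  have cosh_arcosh : Real.cosh (arcosh (x / 2)) = x / 2 := Real.cosh_arcosh one_le
  have arcosh_nonneg : 0 ≤ arcosh (x / 2) := Real.arcosh_nonneg one_le
  rw [← le_div_iff₀' two_pos, ← div_le_iff₀' two_pos, ← abs_of_nonneg arcosh_nonneg,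
    ← abs_of_nonneg (div_nonneg hs zero_le_two), ← Real.cosh_le_cosh, cosh_arcosh,
    abs_of_nonneg (div_nonneg hs zero_le_two)]

theorem transLenLE_coe_iff {s : ℝ} (hs : 0 ≤ s) (hA : 2 < |A.1.trace|) :
    TransLenLE (A : PSL2Z) s ↔ |A.1.trace| ≤ traceBound s := by
  rw [TransLenLE, exists_lift_abs_trace_iff fun t : ℤ => 2 * arcosh (t / 2) ≤ s,
    two_mul_arcosh_half_le_iff hs (by exact_mod_cast hA.le), traceBound,
    Int.natCast_floor_eq_floor (by positivity), Int.le_floor]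

theorem InvertedBy.exists_lift_trace_eq_abs {k : ℤ} (hA : InvertedBy k A) :
    ∃ B : SL(2, ℤ), (B : PSL2Z) = A ∧ InvertedBy k B ∧ B.1.trace = |A.1.trace| := by
  rcases abs_choice A.1.trace with h | h
  · exact ⟨A, rfl, hA, h.symm⟩
  · exact ⟨-A, coe_psl_eq_iff.2 (.inr rfl), hA.neg, by rw [trace_neg_sl, h]⟩

end AmbiguousElements

section ClassCount

theorem ncard_eq_mul_ncard_image {α β : Type*} {s : Set α} (hs : s.Finite) {f : α → β} {m : ℕ}
    (hf : ∀ x ∈ s, {y ∈ s | f y = f x}.ncard = m) : s.ncard = m * (f '' s).ncard := by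
  classical
  lift s to Finset α using hs
  rw [← Finset.coe_image, Set.ncard_coe_finset, Set.ncard_coe_finset,
    Finset.card_eq_sum_card_image f, Finset.sum_const_nat (m := m), mul_comm]
  intro y hy
  obtain ⟨x, hx, rfl⟩ := Finset.mem_image.1 hy
  rw [← hf x hx, ← Set.ncard_coe_finset, Finset.coe_filter]
  rfl

variable {T : ℕ}

theorem NAmb_eq_ncard_image {s : ℝ} (hs : 0 ≤ s) :
    NAmb s = ((fun p => ConjClasses.mk (p.2 : PSL2Z)) ''
      primitiveAmbiguousLifts (traceBound s)).ncard := by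
  rw [NAmb]
  congr 1
  ext C
  constructor
  · rintro ⟨γ, rfl, hprim, hhyp, hlen, δ, hconj, hamb⟩
    obtain ⟨i, A, rfl, hA⟩ := ambFst_or_ambSnd_iff.1 hamb
    obtain ⟨G, rfl⟩ := QuotientGroup.mk_surjective γ
    rw [isHyp_coe_iff] at hhyp
    rw [transLenLE_coe_iff hs hhyp] at hlen
    rw [abs_trace_eq_of_isConj hconj] at hhyp hlen
    obtain ⟨B, hBA, hB, trace_B⟩ := hA.exists_lift_trace_eq_abs
    rw [← trace_B] at hhyp hlen
    rw [← hBA] at hconj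
    exact ⟨(i, B), ⟨⟨hB, hhyp, hlen⟩, hprim.of_isConj hconj⟩,
      (ConjClasses.mk_eq_mk_iff_isConj.2 hconj).symm⟩
  · rintro ⟨⟨i, A⟩, ⟨⟨hinv, hlow, hup⟩, hprim⟩, rfl⟩
    have hyp : 2 < |A.1.trace| := lt_abs.2 (.inl hlow)
    refine ⟨A, rfl, hprim, isHyp_coe_iff.2 hyp, (transLenLE_coe_iff hs hyp).2 ?_, A, .refl _,
      ambFst_or_ambSnd_iff.2 ⟨i, A, rfl, hinv⟩⟩
    rwa [abs_of_nonneg (le_trans (by decide) hlow)]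

theorem fiber_eq_invertedConjugates {i : Fin 2} {A : SL(2, ℤ)}
    (hA : (i, A) ∈ primitiveAmbiguousLifts T) :
    {q ∈ primitiveAmbiguousLifts T |
      ConjClasses.mk (q.2 : PSL2Z) = ConjClasses.mk (A : PSL2Z)} =
    invertedConjugates toGL (fun j : Fin 2 => shearReflection j) A := by
  obtain ⟨⟨-, hlow, hup⟩, hprim⟩ := hA
  simp only at hlow hup hprim
  ext ⟨j, B⟩
  simp only [Set.mem_ofPred_eq, eq_comm (b := ConjClasses.mk (A : PSL2Z)),
    ConjClasses.mk_eq_mk_iff_isConj, isConj_coe_psl_iff]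
  constructor
  · rintro ⟨⟨⟨hinv, hlowB, -⟩, -⟩, g, hg⟩
    refine ⟨hinv, g, hg.resolve_right fun hneg => ?_⟩
    have trace_eq := trace_conj_sl g A
    rw [hneg, trace_neg_sl] at trace_eq
    simp only at hlowB
    lia
  · rintro ⟨hinv, g, rfl⟩
    refine ⟨⟨⟨hinv, ?_, ?_⟩, hprim.of_isConj (isConj_coe_psl_iff.2 ⟨g, .inl rfl⟩)⟩, g, .inl rfl⟩ <;>
      rwa [trace_conj_sl]

theorem four_mul_NAmb {s : ℝ} (hs : 0 ≤ s) :
    4 * NAmb s = (primitiveAmbiguousLifts (traceBound s)).ncard := by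
  have finite : (primitiveAmbiguousLifts (traceBound s)).Finite :=
    (finite_ambiguousLifts _).subset (Set.sep_subset _ _)
  rw [NAmb_eq_ncard_image hs]
  refine (ncard_eq_mul_ncard_image finite ?_).symm
  rintro ⟨i, A⟩ hA
  rw [fiber_eq_invertedConjugates hA]
  exact ncard_invertedConjugates_eq_four (lt_abs.2 (.inl hA.1.2.1)) hA.2 hA.1.1

theorem abs_NAmb_sub_le {s : ℝ} (hs : 0 ≤ s) :
    |(NAmb s : ℝ) -
        ((firstKindPairs (traceBound s / 2)).card + (secondKindPairs (traceBound s)).card)| ≤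
      2 * ((traceBound s + 2) * Nat.log 2 (traceBound s)) := by
  have diff_add : (ambiguousLifts (traceBound s) \ primitiveAmbiguousLifts (traceBound s)).ncard +
      4 * NAmb s = 4 * ((firstKindPairs (traceBound s / 2)).card +
        (secondKindPairs (traceBound s)).card) := by
    rw [four_mul_NAmb hs, ← ncard_ambiguousLifts]
    exact Set.ncard_sdiff_add_ncard_of_subset (Set.sep_subset _ _) (finite_ambiguousLifts _)
  have diff_le := ncard_ambiguousLifts_diff_le (traceBound s)
  rify at diff_add diff_le
  rw [abs_le]
  constructor <;> linarith

end ClassCount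

section Asymptotics

open Filter Asymptotics

theorem tendsto_exp_half_atTop : Tendsto (fun s : ℝ => Real.exp (s / 2)) atTop atTop :=
  Real.tendsto_exp_atTop.comp (tendsto_id.atTop_div_const two_pos)

theorem traceBound_sub_exp_isBigO_one :
    (fun s => (traceBound s : ℝ) - 1 * Real.exp (s / 2)) =O[atTop] fun _ => (1 : ℝ) := by
  refine .of_bound 1 ?_
  filter_upwards [eventually_ge_atTop 0] with s hs
  have two_cosh : 2 * Real.cosh (s / 2) = Real.exp (s / 2) + Real.exp (-(s / 2)) := by
    rw [Real.cosh_eq]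
    ring
  have floor_le : (traceBound s : ℝ) ≤ 2 * Real.cosh (s / 2) := Nat.floor_le (by positivity)
  have lt_floor : 2 * Real.cosh (s / 2) < traceBound s + 1 := Nat.lt_floor_add_one _
  have exp_neg_le : Real.exp (-(s / 2)) ≤ 1 := Real.exp_le_one_iff.2 (by linarith)
  rw [one_mul, norm_one, mul_one, Real.norm_eq_abs, abs_le]
  constructor <;> linarith [Real.exp_pos (-(s / 2))]

theorem tendsto_traceBound : Tendsto traceBound atTop atTop :=
  tendsto_natCast_atTop_iff.1 (tendsto_atTop_of_sub_const_mul_isBigO_one one_pos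
    tendsto_exp_half_atTop traceBound_sub_exp_isBigO_one)

theorem mul_natLog_two_isBigO :
    (fun T : ℕ => ((T : ℝ) + 2) * Nat.log 2 T) =O[atTop] fun T : ℕ => T * (1 + Real.log T) := by
  have add_two : (fun T : ℕ => (T : ℝ) + 2) =O[atTop] fun T : ℕ => (T : ℝ) :=
    (isBigO_refl _ _).add ((isLittleO_const_left.2
      (.inr (tendsto_norm_atTop_atTop.comp tendsto_natCast_atTop_atTop))).isBigO)
  have natLog : (fun T : ℕ => (Nat.log 2 T : ℝ)) =O[atTop] fun T : ℕ => 1 + Real.log T := by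
    refine .of_bound (1 / Real.log 2) (.of_forall fun T => ?_)
    have natLog_le := Real.natLog_le_logb T 2
    have log_nonneg := Real.log_natCast_nonneg T
    rw [Real.logb, Nat.cast_two, ← one_div_mul_eq_div] at natLog_le
    rw [Real.norm_of_nonneg (by positivity), Real.norm_of_nonneg (by positivity)]
    exact natLog_le.trans (by gcongr; linarith)
  exact add_two.mul natLog

theorem NAmb_sub_traceBound_isBigO :
    (fun s => (NAmb s : ℝ) -
      3 / Real.pi ^ 2 * (traceBound s * Real.log (traceBound s) ^ 2)) =O[atTop]
      fun s => traceBound s * (1 + Real.log (traceBound s)) := by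
  have nonprimitive : (fun s => (NAmb s : ℝ) - ((firstKindPairs (traceBound s / 2)).card +
      (secondKindPairs (traceBound s)).card)) =O[atTop]
      fun s => traceBound s * (1 + Real.log (traceBound s)) := by
    refine .trans (.of_bound 2 ?_) (mul_natLog_two_isBigO.comp_tendsto tendsto_traceBound)
    filter_upwards [eventually_ge_atTop 0] with s hs
    exact (abs_NAmb_sub_le hs).trans (by gcongr; exact Real.le_norm_self _)
  exact (nonprimitive.add (card_pairs_isBigO.comp_tendsto tendsto_traceBound)).congr_left
    fun s => sub_add_sub_cancel _ _ _

theorem one_add_half_isBigO : (fun s : ℝ => 1 + s / 2) =O[atTop] fun s : ℝ => s :=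
  (isLittleO_const_id_atTop 1).isBigO.add
    ((isBigO_refl _ _).const_mul_left (1 / 2) |>.congr_left fun s => by ring)

theorem traceBound_mul_one_add_log_isBigO :
    (fun s => (traceBound s : ℝ) * (1 + Real.log (traceBound s))) =O[atTop]
      fun s => s * Real.exp (s / 2) := by
  have traceBound_isBigO := (isTheta_of_sub_const_mul_isBigO_one one_pos tendsto_exp_half_atTop
    traceBound_sub_exp_isBigO_one).1
  have log_sub := log_sub_log_isBigO_one_of_sub_const_mul one_pos tendsto_exp_half_atTop
    traceBound_sub_exp_isBigO_one
  simp only [Real.log_exp] at log_sub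
  have log_isBigO : (fun s => 1 + Real.log (traceBound s)) =O[atTop] fun s : ℝ => s :=
    ((log_sub.trans (isLittleO_const_id_atTop 1).isBigO).add one_add_half_isBigO).congr_left
      fun s => by ring
  exact (traceBound_isBigO.mul log_isBigO).congr_right fun s => mul_comm _ _

end Asymptotics

/-- Theorem 14, first claim: as `s → +∞`,
`𝒩_A(s) = (3/(4π²)) s² e^{s/2} + O(s e^{s/2})`. -/
theorem ambiguous_classes_asymptotic :
    (fun s : ℝ => (NAmb s : ℝ) - 3 / (4 * Real.pi ^ 2) * s ^ 2 * Real.exp (s / 2))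
      =O[Filter.atTop] fun s : ℝ => s * Real.exp (s / 2) := by
  have classes := NAmb_sub_traceBound_isBigO.trans traceBound_mul_one_add_log_isBigO
  have main_term := mul_log_sq_sub_isBigO one_pos tendsto_exp_half_atTop
    traceBound_sub_exp_isBigO_one
  simp only [Real.log_exp] at main_term
  have error : (fun s : ℝ => Real.exp (s / 2) * (1 + s / 2)) =O[Filter.atTop]
      fun s => s * Real.exp (s / 2) :=
    ((Asymptotics.isBigO_refl _ _).mul one_add_half_isBigO).congr_right fun s => mul_comm _ _
  refine (classes.add ((main_term.trans error).const_mul_left (3 / Real.pi ^ 2))).congr_left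
    fun s => ?_
  field_simp
  ring
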